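/- Let p be an odd prime, let k ≥ 1, and let H ≤ S_{p^k} be the stabilizer of the partition of {1,…,p^k} into the p consecutive blocks of size p^{k-1} (so H is isomorphic to the wreath product S_{p^{k-1}} ≀ S_p). Then for every χ ∈ Irr_{p'}(S_{p^k}), the restriction of χ to H has a unique irreducible constituent χ* of degree coprime to p; this constituent occurs with multiplicity 1, and every other irreducible constituent of the restriction has degree divisible by p. Moreover, the map χ ↦ χ* is a bijection from Irr_{p'}(S_{p^k}) onto Irr_{p'}(H). -/

import Mathlib

open scoped Classical

noncomputable section

/-- The set of irreducible complex characters of a group `G`. -/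
def Irr (G : Type) [Group G] : Set (G → ℂ) :=
  {χ | ∃ V : FDRep ℂ G, CategoryTheory.Simple V ∧ FDRep.character V = χ}

/-- The set of irreducible complex characters of `G` whose degree is coprime to `p`. -/
def IrrCoprime (p : ℕ) (G : Type) [Group G] : Set (G → ℂ) :=
  {χ | ∃ V : FDRep ℂ G, CategoryTheory.Simple V ∧ FDRep.character V = χ ∧
    Nat.Coprime (Module.finrank ℂ V) p}

/-- The inner product `⟨χ|_H, ψ⟩` of the restriction of a class function `χ` of `G`
to a subgroup `H` with a class function `ψ` of `H`. -/
def charInner {G : Type} [Group G] (H : Subgroup G) (χ : G → ℂ) (ψ : ↥H → ℂ) : ℂ :=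
  (Nat.card ↥H : ℂ)⁻¹ * ∑ᶠ h : ↥H, χ ↑h * (starRingEnd ℂ) (ψ h)

/-!
Let `g` be an element of `p`-power order of a finite group. Then `χ(1) ≡ χ(g)` modulo `p` whenever
`χ(g)` is an integer, and `∑ |χ(g)|² ≤ |C(g)|` for any set of irreducible characters `χ`. Hence if
as many as `|C(g)|` irreducible characters take integer values prime to `p` at `g`, all others
vanish there, and these are exactly the characters of degree prime to `p`. Here `g` acts as a
`p^k`-cycle, so that `|C(g)| ≤ p^k`.

For the symmetric group on `N = p^k` points the `p^k` characters are the hook characters `h_r`,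
`r < N`, that is, the exterior powers of the standard representation, with values `±1` on an
`N`-cycle. They are determined by `(1 + t) ∑ h_r(σ) t^r = det(1 + t P_σ)`. For the wreath product
of the symmetric group on `q` points by that on `m` points, `mq = p^k`, they are obtained for
`c < q`, `b < m` by tensor induction of `h_c` from the base group, twisted by the `c`-th power of
the sign of the top group and multiplied by its hook character `h_b`.

The determinant and the tensor-induced character of an element of the wreath product are both
products over the cycles of its top component, of functions of the products of the base components
along these cycles. Averaging over the base group one cycle at a time gives
`⟨det(1 + t P), ψ_{c,b}⟩ = (1 + t) t^(cm + b)`, so `h_r` restricts with multiplicity one to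
`ψ_{c,b}` when `r = cm + b` and not at all otherwise.
-/

open Equiv (Perm)
open Matrix (trace)
open Subgroup (centralizer)
open Finset.HasAntidiagonal (antidiagonal)
open scoped ComplexConjugate

/-! ### Characters of finite groups -/

section Characters

variable {G : Type} [Group G]

/-- A homomorphism into a group of complex matrices, regarded as a finite-dimensional
representation on column vectors. -/
def matrixFDRep {ι : Type} [Fintype ι] [DecidableEq ι] (ρ : G →* Matrix ι ι ℂ) : FDRep ℂ G :=
  FDRep.of ((Matrix.toLinAlgEquiv' : Matrix ι ι ℂ ≃ₐ[ℂ] _).toMonoidHom.comp ρ)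

theorem character_matrixFDRep {ι : Type} [Fintype ι] [DecidableEq ι] (ρ : G →* Matrix ι ι ℂ)
    (g : G) : (matrixFDRep ρ).character g = trace (ρ g) :=
  Matrix.trace_toLin'_eq _

theorem exists_matrix_trace_eq_character (V : FDRep ℂ G) :
    ∃ ρ : G →* Matrix (Fin (Module.finrank ℂ V)) (Fin (Module.finrank ℂ V)) ℂ,
      ∀ g, trace (ρ g) = V.character g := by
  let b := Module.finBasis ℂ V
  exact ⟨(LinearMap.toMatrixAlgEquiv b).toMonoidHom.comp V.ρ,
    fun g => (LinearMap.trace_eq_matrix_trace ℂ b (V.ρ g)).symm⟩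

open scoped ComplexOrder in
theorem exists_posDef_invariant [Finite G] {ι : Type*} [Fintype ι] [DecidableEq ι]
    (ρ : G →* Matrix ι ι ℂ) :
    ∃ A : Matrix ι ι ℂ, A.PosDef ∧ ∀ g, (ρ g).conjTranspose * A * ρ g = A := by
  cases nonempty_fintype G
  refine ⟨∑ g, (ρ g).conjTranspose * ρ g, ?_, fun h => ?_⟩
  · rw [← Finset.add_sum_erase _ _ (Finset.mem_univ 1)]
    refine Matrix.PosDef.add_posSemidef ?_
      (Matrix.posSemidef_sum _ fun g _ => Matrix.posSemidef_conjTranspose_mul_self _)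
    simpa using Matrix.PosDef.one
  · simp only [Finset.mul_sum, Finset.sum_mul]
    refine Fintype.sum_equiv (Equiv.mulRight h) _ _ fun g => ?_
    simp [Matrix.mul_assoc]

open scoped ComplexOrder in
theorem trace_map_inv [Finite G] {ι : Type*} [Fintype ι] [DecidableEq ι]
    (ρ : G →* Matrix ι ι ℂ) (g : G) : trace (ρ g⁻¹) = conj (trace (ρ g)) := by
  obtain ⟨A, hA, hinv⟩ := exists_posDef_invariant ρ
  have hdet : IsUnit A.det := (Matrix.isUnit_iff_isUnit_det A).mp hA.isUnit
  have hconj : (ρ g).conjTranspose * A = A * ρ g⁻¹ := by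
    conv_rhs => rw [← hinv g, Matrix.mul_assoc, ← map_mul, mul_inv_cancel, map_one, Matrix.mul_one]
  calc trace (ρ g⁻¹) = trace (A⁻¹ * ((ρ g).conjTranspose * A)) := by
        rw [hconj, Matrix.nonsing_inv_mul_cancel_left _ _ hdet]
    _ = trace (ρ g).conjTranspose := by
        rw [Matrix.trace_mul_comm, Matrix.mul_assoc, Matrix.mul_nonsing_inv _ hdet, Matrix.mul_one]
    _ = conj (trace (ρ g)) := Matrix.trace_conjTranspose _

theorem character_inv [Finite G] (V : FDRep ℂ G) (g : G) :
    V.character g⁻¹ = conj (V.character g) := by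
  obtain ⟨ρ, hρ⟩ := exists_matrix_trace_eq_character V
  rw [← hρ, ← hρ, trace_map_inv]

open Polynomial in
theorem exists_aeval_eq_sum_of_forall_pow_eq_one {N : ℕ} [NeZero N] {ζ : ℂ}
    (hζ : IsPrimitiveRoot ζ N) (s : Multiset ℂ) (hs : ∀ z ∈ s, z ^ N = 1) :
    ∃ f : ℤ[X], aeval ζ f = s.sum ∧ f.eval 1 = s.card := by
  induction s using Multiset.induction_on with
  | empty => exact ⟨0, by simp, by simp⟩
  | cons z s ih =>
    obtain ⟨f, hf, hf1⟩ := ih fun w hw => hs w (Multiset.mem_cons_of_mem hw)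
    obtain ⟨i, -, hi⟩ := hζ.eq_pow_of_pow_eq_one (hs z (Multiset.mem_cons_self z s))
    exact ⟨X ^ i + f, by simp [hf, hi], by simp [hf1, add_comm]⟩

theorem pow_eq_one_of_mem_roots_charpoly {K ι : Type*} [Field K] [Fintype ι] [DecidableEq ι]
    {M : Matrix ι ι K} {N : ℕ} (hM : M ^ N = 1) {z : K} (hz : z ∈ M.charpoly.roots) :
    z ^ N = 1 := by
  have hspec : z ^ N ∈ spectrum K (M ^ N) :=
    spectrum.pow_mem_pow M N
      (Matrix.mem_spectrum_iff_isRoot_charpoly.2 (Polynomial.isRoot_of_mem_roots hz))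
  rw [hM] at hspec
  cases subsingleton_or_nontrivial (Matrix ι ι K) with
  | inl _ => simp [spectrum.of_subsingleton] at hspec
  | inr _ => simpa [spectrum.one_eq] using hspec

open Polynomial in
theorem dvd_card_sub_trace {ι : Type*} [Fintype ι] [DecidableEq ι] {p n : ℕ} (hp : p.Prime)
    {M : Matrix ι ι ℂ} (hM : M ^ p ^ n = 1) {a : ℤ} (ha : trace M = a) :
    (p : ℤ) ∣ Fintype.card ι - a := by
  have : Fact p.Prime := ⟨hp⟩
  have hpos : 0 < p ^ (n + 1) := pow_pos hp.pos _
  have : NeZero (p ^ (n + 1)) := ⟨hpos.ne'⟩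
  have hM' : M ^ p ^ (n + 1) = 1 := by rw [pow_succ, pow_mul, hM, one_pow]
  obtain ⟨ζ, hζ⟩ : ∃ ζ : ℂ, IsPrimitiveRoot ζ (p ^ (n + 1)) :=
    ⟨_, Complex.isPrimitiveRoot_exp _ hpos.ne'⟩
  obtain ⟨f, hf, hf1⟩ := exists_aeval_eq_sum_of_forall_pow_eq_one hζ M.charpoly.roots
    fun z hz => pow_eq_one_of_mem_roots_charpoly hM' hz
  rw [← (IsAlgClosed.splits M.charpoly).natDegree_eq_card_roots,
    Matrix.charpoly_natDegree_eq_dim] at hf1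
  rw [← Matrix.trace_eq_sum_roots_charpoly, ha] at hf
  -- `f(ζ) = a` makes the cyclotomic polynomial divide `f - a`, and its value at `1` is `p`.
  have hdvd : cyclotomic (p ^ (n + 1)) ℤ ∣ f - C a := by
    rw [cyclotomic_eq_minpoly hζ hpos]
    exact minpoly.isIntegrallyClosed_dvd (hζ.isIntegral hpos) (by simp [hf])
  simpa [hf1] using eval_dvd (x := 1) hdvd

theorem dvd_finrank_sub_character {p n : ℕ} (hp : p.Prime) (V : FDRep ℂ G) {g : G}
    (hg : g ^ p ^ n = 1) {a : ℤ} (ha : V.character g = a) :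
    (p : ℤ) ∣ Module.finrank ℂ V - a := by
  obtain ⟨ρ, hρ⟩ := exists_matrix_trace_eq_character V
  simpa using dvd_card_sub_trace hp (M := ρ g) (by rw [← map_pow, hg, map_one])
    ((hρ g).trans ha)

theorem dvd_finrank_iff_dvd_character {p n : ℕ} (hp : p.Prime) (V : FDRep ℂ G) {g : G}
    (hg : g ^ p ^ n = 1) {a : ℤ} (ha : V.character g = a) :
    p ∣ Module.finrank ℂ V ↔ (p : ℤ) ∣ a := by
  rw [← Int.natCast_dvd_natCast]
  exact dvd_iff_dvd_of_dvd_sub (dvd_finrank_sub_character hp V hg ha)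

theorem ncard_conjugatesOf_mul_card_centralizer (g : G) :
    (conjugatesOf g).ncard * Nat.card (centralizer {g}) = Nat.card G := by
  have horbit : MulAction.orbit (ConjAct G) g = conjugatesOf g :=
    ConjAct.orbit_eq_carrier_conjClasses g
  rw [Subgroup.nat_card_centralizer_nat_card_stabilizer, ← horbit, ← MulAction.index_stabilizer,
    Subgroup.index_mul_card]
  rfl

theorem sum_norm_inner_sq_le_mul {E I : Type*} [NormedAddCommGroup E] [InnerProductSpace ℂ E]
    [Fintype I] [DecidableEq I] {v : I → E} {N : ℝ} (hN : 0 < N)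
    (hv : ∀ i j, inner ℂ (v i) (v j) = if i = j then (N : ℂ) else 0) (x : E) :
    ∑ i, ‖inner ℂ (v i) x‖ ^ 2 ≤ N * ‖x‖ ^ 2 := by
  have hsq : (√N : ℂ) * √N = N := by
    exact_mod_cast congrArg Complex.ofReal (Real.mul_self_sqrt hN.le)
  have hne : (√N : ℂ) ≠ 0 := by exact_mod_cast (Real.sqrt_pos.2 hN).ne'
  have horth : Orthonormal ℂ fun i => (√N : ℂ)⁻¹ • v i := by
    rw [orthonormal_iff_ite]
    intro i j
    rw [inner_smul_left, inner_smul_right, hv]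
    split_ifs <;> simp [← hsq, hne]
  have hbessel := horth.sum_inner_products_le x (s := Finset.univ)
  simp only [inner_smul_left, norm_mul, mul_pow, ← Finset.mul_sum] at hbessel
  simp only [map_inv₀, Complex.conj_ofReal, norm_inv, Complex.norm_real, Real.norm_eq_abs,
    inv_pow, sq_abs, Real.sq_sqrt hN.le] at hbessel
  rwa [inv_mul_le_iff₀ hN] at hbessel

theorem sum_norm_sq_le_card_centralizer [Fintype G] {I : Type*} [Fintype I] [DecidableEq I]
    (X : I → G → ℂ) (hclass : ∀ i x y, X i (y * x * y⁻¹) = X i x)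
    (horth : ∀ i j, ∑ x, X i x * conj (X j x) = if i = j then (Nat.card G : ℂ) else 0)
    (g : G) : ∑ i, ‖X i g‖ ^ 2 ≤ Nat.card (centralizer {g}) := by
  set K : Finset G := (conjugatesOf g).toFinset
  have hcard : (K.card : ℝ) * Nat.card (centralizer {g}) = Nat.card G := by
    rw [← Set.ncard_eq_toFinset_card']
    exact_mod_cast ncard_conjugatesOf_mul_card_centralizer g
  have hK : (0 : ℝ) < K.card :=
    Nat.cast_pos.2 (Finset.card_pos.2 ⟨g, Set.mem_toFinset.2 mem_conjugatesOf_self⟩)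
  have hXK (i : I) {x : G} (hx : x ∈ K) : X i x = X i g := by
    have hconj : IsConj g x := by rwa [Set.mem_toFinset] at hx
    obtain ⟨y, rfl⟩ := isConj_iff.1 hconj
    exact hclass i g y
  let w : EuclideanSpace ℂ G := WithLp.toLp 2 fun x => if x ∈ K then 1 else 0
  let v (i : I) : EuclideanSpace ℂ G := WithLp.toLp 2 (X i)
  have hvw (i : I) : inner ℂ (v i) w = K.card * conj (X i g) := by
    simp +contextual [v, w, PiLp.inner_apply, hXK]
  have hw : ‖w‖ ^ 2 = K.card := by
    simp [w, EuclideanSpace.norm_sq_eq, apply_ite]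
  have hbessel := sum_norm_inner_sq_le_mul (N := Nat.card G) (mod_cast Nat.card_pos)
    (v := v) (fun i j => by simp [v, PiLp.inner_apply, horth, eq_comm]) w
  simp only [hvw, hw, norm_mul, RCLike.norm_conj, RCLike.norm_natCast, mul_pow, ← Finset.mul_sum,
    ← hcard] at hbessel
  refine le_of_mul_le_mul_left ?_ (pow_pos hK 2)
  linarith

theorem sum_character_mul_conj_eq_zero [Fintype G] {V W : FDRep ℂ G}
    (hV : CategoryTheory.Simple V) (hW : CategoryTheory.Simple W)
    (hne : V.character ≠ W.character) : ∑ x, V.character x * conj (W.character x) = 0 := by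
  have : Invertible (Nat.card G : ℂ) := invertibleOfNonzero (NeZero.ne _)
  have h := FDRep.char_orthonormal V W
  rw [if_neg fun ⟨e⟩ => hne (FDRep.char_iso e)] at h
  simpa [character_inv] using h

theorem simple_of_sum_character_mul_conj [Fintype G] {V : FDRep ℂ G}
    (hV : ∑ x, V.character x * conj (V.character x) = Nat.card G) : CategoryTheory.Simple V := by
  rw [FDRep.simple_iff_char_is_norm_one]
  simpa [character_inv] using hV

theorem character_eq_zero_of_orthogonal [Fintype G] {I : Type*} [Fintype I] [DecidableEq I]
    {V : I → FDRep ℂ G}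
    (horth : ∀ i j, ∑ x, (V i).character x * conj ((V j).character x) =
      if i = j then (Nat.card G : ℂ) else 0)
    {g : G} (hval : ∀ i, ∃ a : ℤ, a ≠ 0 ∧ (V i).character g = a)
    (hcard : Nat.card (centralizer {g}) ≤ Fintype.card I)
    {W : FDRep ℂ G} (hW : CategoryTheory.Simple W) (hne : ∀ i, (V i).character ≠ W.character) :
    W.character g = 0 := by
  have hV (i : I) : CategoryTheory.Simple (V i) :=
    simple_of_sum_character_mul_conj (by rw [horth, if_pos rfl])
  let X : Option I → G → ℂ := fun o => (o.elim W V).character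
  have hbessel := sum_norm_sq_le_card_centralizer X (fun o => FDRep.char_conj _) (by
    have : Invertible (Nat.card G : ℂ) := invertibleOfNonzero (NeZero.ne _)
    rintro (_ | i) (_ | j)
    · have := (FDRep.simple_iff_char_is_norm_one W).1 hW
      simpa [X, character_inv] using this
    · simpa [X] using sum_character_mul_conj_eq_zero hW (hV j) (hne j).symm
    · simpa [X] using sum_character_mul_conj_eq_zero (hV i) hW (hne i)
    · simpa [X] using horth i j) g
  have hnorm (i : I) : 1 ≤ ‖(V i).character g‖ ^ 2 := by
    obtain ⟨a, ha, h⟩ := hval i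
    rw [h, Complex.norm_intCast]
    exact_mod_cast Int.add_one_le_iff.2 (pow_pos (abs_pos.2 ha) 2)
  have hsum : (Fintype.card I : ℝ) ≤ ∑ i, ‖(V i).character g‖ ^ 2 := by
    simpa using Finset.sum_le_sum fun i (_ : i ∈ Finset.univ) => hnorm i
  have hcard' : (Nat.card (centralizer {g}) : ℝ) ≤ Fintype.card I := mod_cast hcard
  simp only [Fintype.sum_option, X, Option.elim] at hbessel
  have : ‖W.character g‖ ^ 2 ≤ 0 := by linarith
  simpa using this

theorem exists_equiv_irrCoprime [Fintype G] {p n : ℕ} (hp : p.Prime) {I : Type*} [Fintype I]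
    [DecidableEq I] {V : I → FDRep ℂ G}
    (horth : ∀ i j, ∑ x, (V i).character x * conj ((V j).character x) =
      if i = j then (Nat.card G : ℂ) else 0)
    {g : G} (hg : g ^ p ^ n = 1) (hval : ∀ i, ∃ a : ℤ, ¬(p : ℤ) ∣ a ∧ (V i).character g = a)
    (hcard : Nat.card (centralizer {g}) ≤ Fintype.card I) :
    ∃ e : I ≃ IrrCoprime p G, ∀ i, (e i : G → ℂ) = (V i).character := by
  have hmem (i : I) : (V i).character ∈ IrrCoprime p G := by
    obtain ⟨a, ha, hVa⟩ := hval i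
    refine ⟨V i, simple_of_sum_character_mul_conj (by rw [horth, if_pos rfl]), rfl, ?_⟩
    rwa [Nat.coprime_comm, hp.coprime_iff_not_dvd, dvd_finrank_iff_dvd_character hp _ hg hVa]
  have hinj : Function.Injective fun i => (⟨_, hmem i⟩ : IrrCoprime p G) := by
    intro i j hij
    have hchar : (V i).character = (V j).character := congrArg Subtype.val hij
    by_contra hne
    have hij := horth i j
    rw [if_neg hne, hchar, horth, if_pos rfl] at hij
    exact NeZero.ne (Nat.card G : ℂ) hij
  have hsurj : Function.Surjective fun i => (⟨_, hmem i⟩ : IrrCoprime p G) := by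
    rintro ⟨_, W, hW, rfl, hWp⟩
    by_contra! hne
    rw [Nat.coprime_comm, hp.coprime_iff_not_dvd] at hWp
    have hzero : W.character g = (0 : ℤ) := by
      rw [Int.cast_zero]
      refine character_eq_zero_of_orthogonal horth (fun i => ?_) hcard hW fun i h => ?_
      · obtain ⟨a, ha, hVa⟩ := hval i
        exact ⟨a, fun h0 => ha (h0 ▸ dvd_zero _), hVa⟩
      · exact hne i (Subtype.ext h)
    exact hWp ((dvd_finrank_iff_dvd_character hp W hg hzero).2 (dvd_zero _))
  exact ⟨Equiv.ofBijective _ ⟨hinj, hsurj⟩, fun i => rfl⟩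

section FullCycle

variable {α : Type*}

theorem isCycleOn_univ_iff {σ : Perm α} :
    σ.IsCycleOn Set.univ ↔ ∀ a b, σ.SameCycle a b :=
  ⟨fun h _ _ => h.2 trivial trivial, fun h => ⟨Set.bijOn_univ.2 σ.bijective, fun a _ b _ => h a b⟩⟩

theorem isCycleOn_univ_finRotate (n : ℕ) : (finRotate n).IsCycleOn Set.univ := by
  match n with
  | 0 => exact Equiv.Perm.isCycleOn_of_subsingleton _ _
  | 1 => exact Equiv.Perm.isCycleOn_of_subsingleton _ _
  | n + 2 =>
    convert! isCycle_finRotate.isCycleOn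
    simp

theorem eq_of_commute_of_isCycleOn {σ a b : Perm α} (hσ : σ.IsCycleOn Set.univ)
    (ha : Commute a σ) (hb : Commute b σ) {x : α} (hx : a x = b x) : a = b := by
  ext y
  obtain ⟨k, rfl⟩ := isCycleOn_univ_iff.1 hσ x y
  rw [← Equiv.Perm.mul_apply, ← Equiv.Perm.mul_apply, (ha.zpow_right k).eq, (hb.zpow_right k).eq,
    Equiv.Perm.mul_apply, Equiv.Perm.mul_apply, hx]

theorem pow_card_eq_one_of_isCycleOn [Fintype α] {σ : Perm α} (hσ : σ.IsCycleOn Set.univ) :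
    σ ^ Fintype.card α = 1 := by
  ext a
  rw [← Finset.coe_univ] at hσ
  exact hσ.pow_card_apply (Finset.mem_univ a)

theorem eq_empty_or_eq_univ_of_isCycleOn [Fintype α] {σ : Perm α}
    (hσ : σ.IsCycleOn Set.univ) {A : Finset α} (hA : ∀ a ∈ A, σ a ∈ A) :
    A = ∅ ∨ A = Finset.univ := by
  refine A.eq_empty_or_nonempty.imp_right fun ⟨a, ha⟩ => Finset.eq_univ_iff_forall.2 fun b => ?_
  rw [← Finset.coe_univ] at hσ
  obtain ⟨k, -, rfl⟩ := hσ.exists_pow_eq (Finset.mem_univ a) (Finset.mem_univ b)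
  rw [← Perm.iterate_eq_pow]
  exact (show Set.MapsTo σ A A from hA).iterate k ha

theorem card_centralizer_le_of_isCycleOn [Fintype α] [Nonempty α] {j : G →* Perm α}
    (hj : Function.Injective j) {g : G} (hg : (j g).IsCycleOn Set.univ) :
    Nat.card (centralizer {g}) ≤ Fintype.card α := by
  obtain ⟨x⟩ := ‹Nonempty α›
  rw [← Nat.card_eq_fintype_card]
  refine Nat.card_le_card_of_injective (fun h : centralizer {g} => j h x) fun a b hab =>
    Subtype.ext (hj (eq_of_commute_of_isCycleOn hg ?_ ?_ hab))
  all_goals exact Commute.map (Subgroup.mem_centralizer_singleton_iff.1 (Subtype.prop _)) j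

theorem exists_equiv_irrCoprime_of_isCycleOn [Fintype G] [Fintype α] {p n : ℕ} (hp : p.Prime)
    (hα : Fintype.card α = p ^ n) {j : G →* Perm α} (hj : Function.Injective j) {g : G}
    (hg : (j g).IsCycleOn Set.univ) {I : Type*} [Fintype I] [DecidableEq I]
    (hI : Fintype.card I = p ^ n) {V : I → FDRep ℂ G}
    (horth : ∀ i j, ∑ x, (V i).character x * conj ((V j).character x) =
      if i = j then (Nat.card G : ℂ) else 0)
    (hval : ∀ i, ∃ a : ℤ, ¬(p : ℤ) ∣ a ∧ (V i).character g = a) :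
    ∃ e : I ≃ IrrCoprime p G, ∀ i, (e i : G → ℂ) = (V i).character := by
  have : Nonempty α := Fintype.card_pos_iff.1 (hα ▸ pow_pos hp.pos n)
  have hpow : g ^ p ^ n = 1 := hj (by
    rw [map_pow, ← hα, pow_card_eq_one_of_isCycleOn hg, map_one])
  exact exists_equiv_irrCoprime hp horth hpow hval
    ((card_centralizer_le_of_isCycleOn hj hg).trans_eq (hα.trans hI.symm))

end FullCycle

end Characters

/-! ### Symmetric groups -/

section PermDet

variable {R : Type*} [CommRing R] {α : Type*}

theorem forall_apply_eq_iff_exists_subtypeCongr {P : α → Prop} [DecidablePred P] {σ : Perm α}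
    {s : Perm {a // P a}} :
    (∀ a : {a // P a}, σ a = s a) ↔ ∃ s' : Perm {a // ¬P a}, s.subtypeCongr s' = σ := by
  refine ⟨fun h => ?_, ?_⟩
  · have hP (x : α) : P x ↔ P (σ x) := by
      refine ⟨fun hx => h ⟨x, hx⟩ ▸ (s ⟨x, hx⟩).2, fun hx => ?_⟩
      obtain ⟨y, hy⟩ := s.surjective ⟨σ x, hx⟩
      have hyx : σ y = σ x := by rw [h y, hy]
      exact σ.injective hyx ▸ y.2
    refine ⟨σ.subtypePerm fun x => (not_congr (hP x)).symm, Equiv.ext fun x => ?_⟩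
    by_cases hx : P x
    · rw [Perm.subtypeCongr.left_apply _ _ hx, h ⟨x, hx⟩]
    · rw [Perm.subtypeCongr.right_apply _ _ hx]
      rfl
  · rintro ⟨s', rfl⟩ a
    exact Perm.subtypeCongr.left_apply_subtype s s' a

variable [Fintype α]

theorem sum_factorial_mul_card_finset (g : ℕ → ℕ → R) :
    ∑ A : Finset α, ((A.card.factorial * (Fintype.card α - A.card).factorial : ℕ) : R) *
      g A.card (Fintype.card α - A.card) =
    (Fintype.card α).factorial *
      ∑ x ∈ antidiagonal (Fintype.card α), g x.1 x.2 := by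
  rw [← Finset.powerset_univ, Finset.sum_powerset_apply_card fun k =>
    ((k.factorial * (Fintype.card α - k).factorial : ℕ) : R) * g k (Fintype.card α - k),
    Finset.card_univ, Finset.Nat.sum_antidiagonal_eq_sum_range_succ, Finset.mul_sum]
  refine Finset.sum_congr rfl fun k hk => ?_
  rw [← Nat.choose_mul_factorial_mul_factorial (Finset.mem_range_succ_iff.1 hk), nsmul_eq_mul]
  push_cast
  ring

variable [DecidableEq α]

/-- The polynomial `det (1 + t P_σ)` in `t` attached to the permutation matrix of `σ`; it is the
generating function of the exterior powers of the permutation representation. -/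
def permDet (t : R) (σ : Perm α) : R := (1 + t • Matrix.permMatrixHom σ : Matrix α α R).det

theorem permMatrixHom_apply (σ : Perm α) (i j : α) :
    (Matrix.permMatrixHom σ : Matrix α α R) i j = if i = σ j then 1 else 0 := by
  change σ⁻¹.toPEquiv.toMatrix i j = _
  simp [PEquiv.toMatrix_apply, Equiv.toPEquiv_apply, Equiv.symm_apply_eq]

theorem det_one_add_smul (t : R) (M : Matrix α α R) :
    (1 + t • M).det = ∑ A : Finset α, t ^ A.card *
      (M.submatrix (Subtype.val : A → α) (Subtype.val : A → α)).det := by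
  set P := (1 + (Polynomial.X : Polynomial R) • M.map Polynomial.C).det
  have heval : (1 + t • M).det = P.eval t := by
    rw [← Polynomial.coe_evalRingHom, RingHom.map_det]
    congr 1
    ext i j
    simp [Matrix.one_apply, apply_ite, mul_comm t]
  have hdeg : P.natDegree < Fintype.card α + 1 := by
    have := Polynomial.natDegree_det_X_add_C_le M 1
    rw [Matrix.map_one _ Polynomial.C_0 Polynomial.C_1, add_comm] at this
    exact Nat.lt_succ_of_le this
  rw [heval, Polynomial.eval_eq_sum_range' hdeg, ← Finset.powerset_univ, Finset.sum_powerset,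
    Finset.card_univ]
  refine Finset.sum_congr rfl fun k _ => ?_
  rw [Matrix.coeff_det_one_add_X_smul_eq_sum_minors, Finset.sum_mul]
  refine Finset.sum_congr rfl fun A hA => ?_
  rw [(Finset.mem_powersetCard.1 hA).2, mul_comm]

theorem permDet_eq_sum (t : R) (σ : Perm α) :
    permDet t σ = ∑ A : Finset α, t ^ A.card * ∑ s : Perm A,
      if ∀ a : A, σ a = s a then ((Perm.sign s : ℤ) : R) else 0 := by
  rw [permDet, det_one_add_smul]
  simp only [Matrix.det_apply', Matrix.submatrix_apply, permMatrixHom_apply,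
    Finset.prod_ite_zero, Finset.prod_const_one, Finset.mem_univ, forall_true_left, mul_ite,
    mul_one, mul_zero, eq_comm]

theorem sum_ite_forall_apply_eq {M : Type*} [AddCommMonoid M] {P : α → Prop} [DecidablePred P]
    (s : Perm {a // P a}) (F : Perm α → M) :
    (∑ σ : Perm α, if ∀ a : {a // P a}, σ a = s a then F σ else 0) =
      ∑ s' : Perm {a // ¬P a}, F (s.subtypeCongr s') := by
  have hinj : Function.Injective fun s' : Perm {a // ¬P a} => s.subtypeCongr s' := fun a b h =>
    congrArg Prod.snd (Perm.subtypeCongrHom_injective P (a₁ := (s, a)) (a₂ := (s, b)) h)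
  rw [← Finset.sum_filter, ← Finset.sum_image hinj.injOn]
  refine Finset.sum_congr ?_ fun _ _ => rfl
  ext σ
  simpa using forall_apply_eq_iff_exists_subtypeCongr

theorem sum_permDet_mul_eq_sum_finset (t : R) (F : Perm α → R) :
    ∑ σ, permDet t σ * F σ = ∑ A : Finset α, t ^ A.card * ∑ s : Perm {a // a ∈ A},
      ∑ s' : Perm {a // a ∉ A}, ((Perm.sign s : ℤ) : R) * F (s.subtypeCongr s') := by
  simp only [permDet_eq_sum, Finset.sum_mul, mul_assoc]
  rw [Finset.sum_comm]
  refine Finset.sum_congr rfl fun A _ => ?_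
  simp only [← Finset.mul_sum]
  rw [Finset.sum_comm]
  congr 1
  refine Finset.sum_congr rfl fun s _ => ?_
  rw [← sum_ite_forall_apply_eq s F, Finset.mul_sum]
  simp only [ite_mul, mul_ite, zero_mul, mul_zero]

theorem sum_permDet_mul (t : R) {F : Perm α → R} {f : ∀ A : Finset α, Perm {a // a ∈ A} → R}
    {f' : ∀ A : Finset α, Perm {a // a ∉ A} → R} {a b : ℕ → R}
    (hF : ∀ A s s', F (Perm.subtypeCongr s s') = f A s * f' A s')
    (ha : ∀ A : Finset α, ∑ s, ((Perm.sign s : ℤ) : R) * f A s = A.card.factorial * a A.card)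
    (hb : ∀ A, ∑ s, f' A s = Nat.factorial (Fintype.card {a // a ∉ A}) *
      b (Fintype.card {a // a ∉ A})) :
    ∑ σ, permDet t σ * F σ = (Fintype.card α).factorial *
      ∑ x ∈ antidiagonal (Fintype.card α), t ^ x.1 * a x.1 * b x.2 := by
  rw [sum_permDet_mul_eq_sum_finset, ← sum_factorial_mul_card_finset fun k l => t ^ k * a k * b l]
  refine Finset.sum_congr rfl fun A _ => ?_
  have hcard : Fintype.card {a // a ∉ A} = Fintype.card α - A.card := by
    rw [Fintype.card_subtype_compl, Fintype.card_coe]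
  simp only [hF, ← mul_assoc, ← Finset.mul_sum, ← Finset.sum_mul, ha, hb, hcard]
  push_cast
  ring

theorem permDet_reindex {β : Type*} [Fintype β] [DecidableEq β] (t : R) (e : α ≃ β)
    {σ : Perm α} {τ : Perm β} (h : ∀ a, e (σ a) = τ (e a)) : permDet t σ = permDet t τ := by
  rw [permDet, permDet, ← Matrix.det_submatrix_equiv_self e]
  congr 1
  ext i j
  simp only [Matrix.submatrix_apply, Matrix.add_apply, Matrix.smul_apply, Matrix.one_apply,
    permMatrixHom_apply, ← h, e.injective.eq_iff]

theorem permDet_subtypeCongr (t : R) {P : α → Prop} [DecidablePred P] (s : Perm {a // P a})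
    (s' : Perm {a // ¬P a}) :
    permDet t (s.subtypeCongr s') = permDet t s * permDet t s' := by
  have hsum : permDet t (s.subtypeCongr s') = permDet t (Perm.sumCongr s s') :=
    (permDet_reindex t (Equiv.sumCompl P) fun a => by
      rcases a with a | a <;> simp [Perm.subtypeCongr]).symm
  rw [hsum, permDet, permDet, permDet, ← Matrix.det_fromBlocks_zero₂₁ _ 0 _]
  congr 1
  ext (i | i) (j | j) <;> simp [Matrix.one_apply, Equiv.symm_apply_eq]

theorem sum_sign : ∑ s : Perm α, ((Perm.sign s : ℤ) : R) =
    (Fintype.card α).factorial * if Fintype.card α ≤ 1 then 1 else 0 := by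
  split_ifs with h
  · have : Subsingleton α := Fintype.card_le_one_iff_subsingleton.1 h
    rw [Fintype.sum_subsingleton _ 1, Nat.factorial_eq_one.2 h]
    simp
  · have : Nontrivial α := Fintype.one_lt_card_iff_nontrivial.1 (not_le.1 h)
    obtain ⟨a, b, hab⟩ := exists_pair_ne α
    have hswap : ∑ s : Perm α, (Perm.sign s : ℤ) = -∑ s : Perm α, (Perm.sign s : ℤ) := by
      rw [← Finset.sum_neg_distrib]
      exact Fintype.sum_equiv (Equiv.mulLeft (Equiv.swap a b)) _ _ fun s => by
        simp [Perm.sign_swap hab]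
    rw [mul_zero, ← Int.cast_sum, self_eq_neg.1 hswap, Int.cast_zero]

theorem sum_permDet (u : R) : ∑ σ : Perm α, permDet u σ =
    (Fintype.card α).factorial * if Fintype.card α = 0 then 1 else 1 + u := by
  have h := sum_permDet_mul (α := α) u (F := fun _ => 1) (f := fun _ _ => 1) (f' := fun _ _ => 1)
    (a := fun k => if k ≤ 1 then 1 else 0) (b := fun _ => 1) (fun _ _ _ => (one_mul 1).symm)
    (fun A => by simpa using sum_sign (R := R) (α := {a // a ∈ A})) (fun A => by
      rw [Finset.sum_const, Finset.card_univ, Fintype.card_perm, nsmul_eq_mul])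
  simp only [mul_one] at h
  rw [h]
  congr 1
  obtain h0 | n := Fintype.card α
  · simp
  · rw [Finset.Nat.sum_antidiagonal_succ]
    cases n <;> simp [Finset.Nat.sum_antidiagonal_succ]

theorem sum_permDet_mul_sign (u : R) :
    ∑ σ : Perm α, permDet u σ * ((Perm.sign σ : ℤ) : R) = (Fintype.card α).factorial *
      if Fintype.card α = 0 then 1 else u ^ (Fintype.card α - 1) * (1 + u) := by
  rw [sum_permDet_mul (α := α) u (f := fun _ s => ((Perm.sign s : ℤ) : R))
    (f' := fun _ s => ((Perm.sign s : ℤ) : R))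
    (a := fun _ => 1) (b := fun l => if l ≤ 1 then 1 else 0)]
  · congr 1
    obtain h0 | n := Fintype.card α
    · simp
    · rw [Finset.Nat.sum_antidiagonal_succ']
      cases n with
      | zero => simp [add_comm]
      | succ n =>
        simp [Finset.Nat.sum_antidiagonal_succ']
        ring
  · intro A s s'
    have hsign : Perm.sign (s.subtypeCongr s') = Perm.sign s * Perm.sign s' := by
      convert! Perm.sign_subtypeCongr s s'
    rw [hsign, Units.val_mul, Int.cast_mul]
  · intro A
    simp [← Int.cast_mul, Fintype.card_perm]
  · exact fun A => sum_sign

theorem sum_permDet_mul_permDet [Nonempty α] (t u : R) :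
    ∑ σ : Perm α, permDet t σ * permDet u σ = (Fintype.card α).factorial *
      ((1 + t) * (1 + u) * ∑ r ∈ Finset.range (Fintype.card α), (t * u) ^ r) := by
  rw [sum_permDet_mul (α := α) t (f := fun _ => permDet u) (f' := fun _ => permDet u)
    (a := fun k => if k = 0 then 1 else u ^ (k - 1) * (1 + u))
    (b := fun k => if k = 0 then 1 else 1 + u)]
  · congr 1
    obtain ⟨n, hn⟩ := Nat.exists_eq_succ_of_ne_zero (Fintype.card_ne_zero (α := α))
    have hterm : ∀ i ∈ Finset.range n, t ^ (i + 1) * (u ^ i * (1 + u)) *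
        (if n - i = 0 then 1 else 1 + u) = t * (1 + u) ^ 2 * (t * u) ^ i := fun i hi => by
      rw [if_neg (Nat.sub_ne_zero_of_lt (Finset.mem_range.1 hi))]
      ring
    rw [hn, Finset.Nat.sum_antidiagonal_succ, Finset.Nat.sum_antidiagonal_eq_sum_range_succ_mk,
      Finset.sum_range_succ]
    simp only [Nat.succ_ne_zero, if_true, if_false, Nat.sub_self, Nat.add_sub_cancel]
    rw [Finset.sum_congr rfl hterm, ← Finset.mul_sum]
    linear_combination -(1 + u) * geom_sum_succ (x := t * u) (n := n) -
      t * (1 + u) * geom_sum_succ' (x := t * u) (n := n)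
  · intro A s s'
    convert! permDet_subtypeCongr u s s'
  · intro A
    simpa [mul_comm] using sum_permDet_mul_sign (α := {a // a ∈ A}) u
  · exact fun A => sum_permDet u

theorem sign_of_isCycleOn_univ [Nonempty α] {σ : Perm α} (hσ : σ.IsCycleOn Set.univ) :
    Perm.sign σ = -(-1) ^ Fintype.card α := by
  cases subsingleton_or_nontrivial α with
  | inl h =>
    have hcard : Fintype.card α = 1 :=
      le_antisymm (Fintype.card_le_one_iff_subsingleton.2 h) Fintype.card_pos
    simp [Subsingleton.elim σ 1, hcard]
  | inr _ =>
    have hcycle : σ.IsCycle := Perm.isCycle_iff_exists_isCycleOn.2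
      ⟨Set.univ, Set.nontrivial_univ, hσ, fun _ _ => Set.mem_univ _⟩
    have hsupp : σ.support = Finset.univ := Finset.eq_univ_iff_forall.2 fun a =>
      Perm.mem_support.2 (hσ.apply_ne Set.nontrivial_univ (Set.mem_univ a))
    rw [hcycle.sign, hsupp, Finset.card_univ]

theorem sum_sign_ite_univ (σ : Perm α) :
    (∑ s : Perm (Finset.univ : Finset α),
      if ∀ a : (Finset.univ : Finset α), σ a = s a then ((Perm.sign s : ℤ) : R) else 0) =
      ((Perm.sign σ : ℤ) : R) := by
  let e : (Finset.univ : Finset α) ≃ α := Equiv.subtypeUnivEquiv Finset.mem_univ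
  rw [Fintype.sum_eq_single (e.symm.permCongr σ), if_pos, Perm.sign_permCongr]
  · intro a
    simp [e, Equiv.permCongr_apply]
  · intro s hs
    refine if_neg fun h => hs (Equiv.ext fun a => ?_)
    exact Subtype.ext (h a).symm

theorem permDet_of_isCycleOn [Nonempty α] (t : R) {σ : Perm α} (hσ : σ.IsCycleOn Set.univ) :
    permDet t σ = 1 - (-t) ^ Fintype.card α := by
  rw [permDet_eq_sum, Fintype.sum_eq_add ∅ Finset.univ Finset.univ_nonempty.ne_empty.symm]
  · rw [sum_sign_ite_univ, sign_of_isCycleOn_univ hσ, Finset.card_univ, neg_pow t]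
    simp
    ring
  · rintro A ⟨hA, hA'⟩
    refine mul_eq_zero_of_right _ (Finset.sum_eq_zero fun s _ => if_neg fun h => ?_)
    refine (eq_empty_or_eq_univ_of_isCycleOn hσ fun a ha => ?_).elim hA hA'
    exact h ⟨a, ha⟩ ▸ (s ⟨a, ha⟩).2

end PermDet

section ExteriorPower

variable {R : Type*} [CommRing R] {ι : Type*} [Fintype ι] [LinearOrder ι]

/-- The `r`-th exterior power (compound matrix) of a square matrix, as a monoid homomorphism. -/
def exteriorPowerMatrix (r : ℕ) :
    Matrix ι ι R →* Matrix (Set.powersetCard ι r) (Set.powersetCard ι r) R where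
  toFun M := LinearMap.toMatrix ((Pi.basisFun R ι).exteriorPower r)
    ((Pi.basisFun R ι).exteriorPower r) (exteriorPower.map r (Matrix.toLin' M))
  map_one' := by rw [Matrix.toLin'_one, exteriorPower.map_id, LinearMap.toMatrix_id]
  map_mul' M N := by
    rw [Matrix.toLin'_mul, exteriorPower.map_comp,
      LinearMap.toMatrix_comp _ ((Pi.basisFun R ι).exteriorPower r)]

theorem exteriorPowerMatrix_apply_self {r : ℕ} (M : Matrix ι ι R) (s : Set.powersetCard ι r) :
    exteriorPowerMatrix r M s s =
      (M.submatrix (Subtype.val : s.1 → ι) (Subtype.val : s.1 → ι)).det := by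
  simp only [exteriorPowerMatrix, MonoidHom.coe_mk, OneHom.coe_mk, LinearMap.toMatrix_apply]
  rw [exteriorPower.basis_repr_apply, exteriorPower.basis_apply,
    exteriorPower.map_apply_ιMulti_family, exteriorPower.ιMulti_family,
    exteriorPower.ιMultiDual_apply_ιMulti, ← Matrix.det_transpose,
    ← Matrix.det_submatrix_equiv_self (Finset.orderIsoOfFin s.1 s.2).toEquiv]
  congr 1
  ext i j
  simp [Set.powersetCard.ofFinEmbEquiv_symm_apply, Matrix.toLin'_apply]
  rfl

theorem trace_exteriorPowerMatrix (r : ℕ) (M : Matrix ι ι R) :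
    trace (exteriorPowerMatrix r M) = ∑ A ∈ Finset.powersetCard r Finset.univ,
      (M.submatrix (Subtype.val : A → ι) (Subtype.val : A → ι)).det := by
  refine (Fintype.sum_congr _ _ (exteriorPowerMatrix_apply_self M)).trans ?_
  exact (Finset.sum_subtype (Finset.powersetCard r Finset.univ)
    (fun A => by simp [Finset.mem_powersetCard])
    fun A => (M.submatrix (Subtype.val : A → ι) (Subtype.val : A → ι)).det).symm

theorem det_one_add_smul_eq_sum_trace_exteriorPowerMatrix (t : R) (M : Matrix ι ι R) :
    (1 + t • M).det =
      ∑ r ∈ Finset.range (Fintype.card ι + 1), trace (exteriorPowerMatrix r M) * t ^ r := by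
  rw [det_one_add_smul, ← Finset.powerset_univ, Finset.sum_powerset, Finset.card_univ]
  refine Finset.sum_congr rfl fun r _ => ?_
  rw [trace_exteriorPowerMatrix, Finset.sum_mul]
  refine Finset.sum_congr rfl fun A hA => ?_
  rw [(Finset.mem_powersetCard.1 hA).2, mul_comm]

theorem map_trace_exteriorPowerMatrix (f : R →+* R) {M : Matrix ι ι R} (hM : M.map f = M) (r : ℕ) :
    f (trace (exteriorPowerMatrix r M)) = trace (exteriorPowerMatrix r M) := by
  simp only [trace_exteriorPowerMatrix, map_sum, RingHom.map_det, RingHom.mapMatrix_apply,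
    ← Matrix.submatrix_map, hM]

end ExteriorPower

section Hook

/-- If all row sums of `A` agree, then `A` acts on the quotient of the space of column vectors by
the all-ones vector; this is the matrix of that action in the basis `e_a`, `a ≠ o`. -/
def quotientOnes {R α : Type*} [CommRing R] (o : α) (A : Matrix α α R) :
    Matrix {a // a ≠ o} {a // a ≠ o} R :=
  Matrix.of fun i j => A i j - A o j

section QuotientOnes

variable {R : Type*} [CommRing R] {α : Type*} [Fintype α] [DecidableEq α] (o : α)
  {A : Matrix α α R} {c : R}

theorem quotientOnes_mul (hA : ∀ i, ∑ j, A i j = c) (B : Matrix α α R) :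
    quotientOnes o (A * B) = quotientOnes o A * quotientOnes o B := by
  ext i j
  have hsum := Fintype.sum_eq_add_sum_subtype_ne (fun k => (A i k - A o k) * (B k j - B o j)) o
  rw [sub_self, mul_zero, zero_add] at hsum
  simp only [quotientOnes, Matrix.mul_apply, Matrix.of_apply]
  rw [← hsum]
  simp only [mul_sub, sub_mul, Finset.sum_sub_distrib, ← Finset.sum_mul, hA]
  ring

theorem det_eq_mul_det_quotientOnes (hA : ∀ i, ∑ j, A i j = c) :
    A.det = c * (quotientOnes o A).det := by
  let B : Matrix α α R := Matrix.of fun i j => if i = o then A o j else A i j - A o j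
  have hAB : A.det = B.det := by
    refine Matrix.det_eq_of_forall_row_eq_smul_add_const (fun i => if i = o then 0 else 1) o
      (if_pos rfl) fun i j => ?_
    by_cases hi : i = o <;> simp [B, hi]
  have hB (i : α) : ∑ j, B i j = if i = o then c else 0 := by
    by_cases hi : i = o <;> simp [B, hi, hA]
  have hcol := Matrix.det_updateCol_sum B o 1
  simp only [Pi.one_apply, one_smul, hB] at hcol
  rw [hAB, ← hcol, Matrix.twoBlockTriangular_det _ (· = o) fun i hi j hj => by simp [hi, hj]]
  congr 1
  · convert! Matrix.det_eq_elem_of_card_eq_one (by simp) (⟨o, rfl⟩ : {a // a = o})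
    simp [Matrix.toSquareBlockProp_def]
  · congr 1
    ext i j
    simp [Matrix.toSquareBlockProp_def, quotientOnes, B, i.2, j.2]

end QuotientOnes

variable {R : Type*} [CommRing R] {α : Type*} [Fintype α] [LinearOrder α] (o : α)

theorem sum_permMatrixHom_apply (σ : Perm α) (i : α) :
    ∑ j, (Matrix.permMatrixHom σ : Matrix α α R) i j = 1 := by
  simp only [permMatrixHom_apply, ← Perm.inv_eq_iff_eq, Finset.sum_ite_eq, Finset.mem_univ, if_true]

/-- The standard representation of a symmetric group, in matrix form: the quotient of the
permutation representation by the all-ones vector. -/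
def stdRep : Perm α →* Matrix {a // a ≠ o} {a // a ≠ o} R where
  toFun σ := quotientOnes o (Matrix.permMatrixHom σ)
  map_one' := by
    ext i j
    simp [quotientOnes, Matrix.one_apply, Subtype.ext_iff, j.2.symm]
  map_mul' σ τ := by rw [map_mul, quotientOnes_mul o (sum_permMatrixHom_apply σ)]

theorem stdRep_apply (σ : Perm α) (i j : {a // a ≠ o}) : (stdRep o σ i j : R) =
    (if (i : α) = σ j then 1 else 0) - if o = σ j then 1 else 0 := by
  rw [← permMatrixHom_apply, ← permMatrixHom_apply]
  rfl

theorem permDet_eq_mul_det_stdRep (t : R) (σ : Perm α) : permDet t σ =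
    (1 + t) * (1 + t • stdRep o σ : Matrix {a // a ≠ o} {a // a ≠ o} R).det := by
  rw [permDet, det_eq_mul_det_quotientOnes o (c := 1 + t)]
  · congr 2
    ext i j
    simp only [quotientOnes, Matrix.of_apply, Matrix.add_apply, Matrix.smul_apply, stdRep_apply,
      permMatrixHom_apply, Matrix.one_apply, Subtype.ext_iff, j.2.symm, if_false, smul_eq_mul]
    ring
  · intro i
    simp only [Matrix.add_apply, Matrix.smul_apply, smul_eq_mul, Finset.sum_add_distrib,
      ← Finset.mul_sum, sum_permMatrixHom_apply, mul_one, Matrix.one_apply, Finset.sum_ite_eq,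
      Finset.mem_univ, if_true]

/-- The `r`-th exterior power of the standard representation of a symmetric group. Its character
is the one attached to the hook partition with leg length `r`. -/
def hookRep (r : ℕ) : Perm α →* Matrix (Set.powersetCard {a // a ≠ o} r)
    (Set.powersetCard {a // a ≠ o} r) ℂ :=
  (exteriorPowerMatrix r).comp (stdRep o)

/-- The character of `hookRep`. -/
def hookChar (r : ℕ) (σ : Perm α) : ℂ := trace (hookRep o r σ)

theorem permDet_eq_sum_hookChar (t : ℂ) (σ : Perm α) :
    permDet t σ = (1 + t) * ∑ r ∈ Finset.range (Fintype.card α), hookChar o r σ * t ^ r := by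
  have hcard : Fintype.card {a // a ≠ o} + 1 = Fintype.card α := by
    rw [Fintype.card_subtype_compl, Fintype.card_subtype_eq]
    exact Nat.sub_add_cancel (Fintype.card_pos_iff.2 ⟨o⟩)
  rw [permDet_eq_mul_det_stdRep o, ← hcard]
  exact congrArg _ (det_one_add_smul_eq_sum_trace_exteriorPowerMatrix t (stdRep o σ))

theorem conj_hookChar (r : ℕ) (σ : Perm α) : conj (hookChar o r σ) = hookChar o r σ := by
  have hstd : (stdRep o σ).map (starRingEnd ℂ) = stdRep o σ := by
    ext i j
    simp only [Matrix.map_apply, stdRep_apply, map_sub, apply_ite (starRingEnd ℂ), map_one,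
      map_zero]
  exact map_trace_exteriorPowerMatrix conj hstd r

theorem eq_of_sum_mul_pow_eq {K : Type*} [Field K] [Infinite K] {n : ℕ} {a b : ℕ → K}
    (h : ∀ t, (1 + t) * ∑ r ∈ Finset.range n, a r * t ^ r =
      (1 + t) * ∑ r ∈ Finset.range n, b r * t ^ r) {r : ℕ} (hr : r < n) : a r = b r := by
  have hpoly : ∑ r ∈ Finset.range n, Polynomial.C (a r) * Polynomial.X ^ r =
      ∑ r ∈ Finset.range n, Polynomial.C (b r) * Polynomial.X ^ r := by
    refine mul_left_cancel₀ (Polynomial.X_add_C_ne_zero (1 : K)) (Polynomial.funext fun t => ?_)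
    simpa [Polynomial.eval_finsetSum, add_comm t] using h t
  simpa [Polynomial.coeff_X_pow, hr] using congrArg (Polynomial.coeff · r) hpoly

theorem sum_mul_permDet {X : Type*} [Fintype X] (F : X → ℂ) (σ : X → Perm α) (t : ℂ) :
    ∑ x, F x * permDet t (σ x) = (1 + t) * ∑ r ∈ Finset.range (Fintype.card α),
      (∑ x, F x * hookChar o r (σ x)) * t ^ r := by
  simp only [permDet_eq_sum_hookChar o, Finset.mul_sum, Finset.sum_mul]
  rw [Finset.sum_comm]
  exact Finset.sum_congr rfl fun r _ => Finset.sum_congr rfl fun x _ => by ring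

theorem sum_permDet_mul_hookChar (t : ℂ) {c : ℕ} (hc : c < Fintype.card α) :
    ∑ σ, permDet t σ * hookChar o c σ =
      (Fintype.card α).factorial * ((1 + t) * t ^ c) := by
  have : Nonempty α := ⟨o⟩
  refine eq_of_sum_mul_pow_eq (a := fun c => ∑ σ, permDet t σ * hookChar o c σ)
    (b := fun c => (Fintype.card α).factorial * ((1 + t) * t ^ c)) (fun u => ?_) hc
  rw [← sum_mul_permDet o _ fun σ => σ, sum_permDet_mul_permDet]
  simp only [Finset.mul_sum]
  exact Finset.sum_congr rfl fun r _ => by ring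

theorem sum_hookChar_mul_hookChar {r s : ℕ} (hr : r < Fintype.card α) (hs : s < Fintype.card α) :
    ∑ σ, hookChar o r σ * hookChar o s σ =
      if s = r then ((Fintype.card α).factorial : ℂ) else 0 := by
  refine eq_of_sum_mul_pow_eq (a := fun s => ∑ σ, hookChar o r σ * hookChar o s σ)
    (b := fun s => if s = r then ((Fintype.card α).factorial : ℂ) else 0) (fun t => ?_) hs
  rw [← sum_mul_permDet o _ fun σ => σ]
  simp only [mul_comm (hookChar o r _), sum_permDet_mul_hookChar o t hr, ite_mul, zero_mul,
    Finset.sum_ite_eq', Finset.mem_range, hr, if_true]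
  ring

theorem hookChar_of_isCycleOn {σ : Perm α} (hσ : σ.IsCycleOn Set.univ) {r : ℕ}
    (hr : r < Fintype.card α) : hookChar o r σ = (-1) ^ r := by
  have : Nonempty α := ⟨o⟩
  refine eq_of_sum_mul_pow_eq (a := fun r => hookChar o r σ) (b := fun r => (-1) ^ r)
    (fun t => ?_) hr
  simp only [← permDet_eq_sum_hookChar, permDet_of_isCycleOn t hσ, ← mul_pow, neg_one_mul]
  rw [← mul_neg_geom_sum, sub_neg_eq_add]

end Hook

/-! ### Cycle products -/

section CycleProduct

theorem decomposeFin_symm_apply_succ_of_ne {m : ℕ} {e : Perm (Fin m)} {i j : Fin m} (h : e i ≠ j) :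
    Perm.decomposeFin.symm (j.succ, e) i.succ = (e i).succ := by
  rw [Perm.decomposeFin_symm_apply_succ,
    Equiv.swap_apply_of_ne_of_ne (Fin.succ_ne_zero _) ((Fin.succ_injective _).ne h)]

variable {M R : Type*} [Monoid M] [CommRing R] {m : ℕ}

/-- The product, over the cycles of `τ`, of the values of `φ` at the products of the colours `z`
around the cycles. The colour `z i` is picked up on arrival at `i`, and the recursion removes the
point `0` from its cycle; the product around a cycle is only canonical up to conjugation, so this is
the intended notion when `φ` is a class function. -/
def cycleProduct (φ : M → R) : {m : ℕ} → (Fin m → M) → Perm (Fin m) → R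
  | 0, _, _ => 1
  | _ + 1, z, τ =>
    Fin.cases (φ (z 0) * cycleProduct φ (Fin.tail z) (Perm.decomposeFin τ).2)
      (fun j => cycleProduct φ (Fin.tail z * Pi.mulSingle j (z 0)) (Perm.decomposeFin τ).2)
      (Perm.decomposeFin τ).1

theorem cycleProduct_fixed (φ : M → R) (z : Fin (m + 1) → M) (e : Perm (Fin m)) :
    cycleProduct φ z (Perm.decomposeFin.symm (0, e)) =
      φ (z 0) * cycleProduct φ (Fin.tail z) e := by
  simp [cycleProduct]

theorem cycleProduct_contract (φ : M → R) (z : Fin (m + 1) → M) (j : Fin m) (e : Perm (Fin m)) :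
    cycleProduct φ z (Perm.decomposeFin.symm (j.succ, e)) =
      cycleProduct φ (Fin.tail z * Pi.mulSingle j (z 0)) e := by
  simp [cycleProduct]

theorem eq_cycleProduct {φ : M → R} {Φ : ∀ {m : ℕ}, (Fin m → M) → Perm (Fin m) → R}
    (zero : ∀ (z : Fin 0 → M) τ, Φ z τ = 1)
    (fixed : ∀ {m} (z : Fin (m + 1) → M) e,
      Φ z (Perm.decomposeFin.symm (0, e)) = φ (z 0) * Φ (Fin.tail z) e)
    (contract : ∀ {m} (z : Fin (m + 1) → M) (j : Fin m) e,
      Φ z (Perm.decomposeFin.symm (j.succ, e)) = Φ (Fin.tail z * Pi.mulSingle j (z 0)) e)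
    (z : Fin m → M) (τ : Perm (Fin m)) : Φ z τ = cycleProduct φ z τ := by
  induction m with
  | zero => exact zero z τ
  | succ m ih =>
    obtain ⟨⟨j, e⟩, rfl⟩ := Perm.decomposeFin.symm.surjective τ
    cases j using Fin.cases with
    | zero => rw [fixed, cycleProduct_fixed, ih]
    | succ j => rw [contract, cycleProduct_contract, ih]

theorem cycleProduct_mul (φ ψ : M → R) (z : Fin m → M) (τ : Perm (Fin m)) :
    cycleProduct φ z τ * cycleProduct ψ z τ = cycleProduct (φ * ψ) z τ := by
  refine eq_cycleProduct (Φ := fun z τ => cycleProduct φ z τ * cycleProduct ψ z τ)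
    (fun _ _ => mul_one 1) (fun z e => ?_) (fun z j e => ?_) z τ
  · simp only [cycleProduct_fixed, Pi.mul_apply, mul_mul_mul_comm]
  · simp only [cycleProduct_contract]

theorem map_cycleProduct {S : Type*} [CommRing S] (f : R →+* S) (φ : M → R) (z : Fin m → M)
    (τ : Perm (Fin m)) : f (cycleProduct φ z τ) = cycleProduct (f ∘ φ) z τ := by
  refine eq_cycleProduct (Φ := fun z τ => f (cycleProduct φ z τ))
    (fun _ _ => map_one f) (fun z e => ?_) (fun z j e => ?_) z τ
  · simp only [cycleProduct_fixed, map_mul, Function.comp_apply]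
  · simp only [cycleProduct_contract]

theorem cycleProduct_comp {N : Type*} [Monoid N] (f : N →* M) (φ : M → R) (z : Fin m → N)
    (τ : Perm (Fin m)) : cycleProduct φ (f ∘ z) τ = cycleProduct (φ ∘ f) z τ := by
  refine eq_cycleProduct (Φ := fun z τ => cycleProduct φ (f ∘ z) τ)
    (fun _ _ => rfl) (fun z e => ?_) (fun z j e => ?_) z τ
  · rw [cycleProduct_fixed]; rfl
  · rw [cycleProduct_contract]
    congr 1
    funext i
    simp only [Pi.mul_apply, Function.comp_apply, map_mul, Fin.tail]
    rw [← Pi.apply_mulSingle (fun _ => f) (fun _ => map_one f)]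

theorem cycleProduct_one (z : Fin m → M) (τ : Perm (Fin m)) :
    cycleProduct (1 : M → R) z τ = 1 :=
  (eq_cycleProduct (Φ := fun _ _ => 1) (fun _ _ => rfl) (fun _ _ => (mul_one 1).symm)
    (fun _ _ _ => rfl) z τ).symm

theorem cycleProduct_zero [NeZero m] (z : Fin m → M) (τ : Perm (Fin m)) :
    cycleProduct (0 : M → R) z τ = 0 := by
  refine (eq_cycleProduct (Φ := fun {m} _ _ => if m = 0 then 1 else 0) (fun _ _ => if_pos rfl)
    (fun _ _ => ?_) (fun {m} _ j _ => ?_) z τ).symm.trans (if_neg (NeZero.ne m))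
  · simp
  · simp [j.pos.ne']

theorem cycleProduct_neg_pow (c : ℕ) (s : Fin m → R) (τ : Perm (Fin m)) :
    cycleProduct (fun s => (-s) ^ c) s τ = ((Perm.sign τ : ℤ) : R) ^ c * ∏ i, (-s i) ^ c := by
  refine (eq_cycleProduct (Φ := fun s τ => ((Perm.sign τ : ℤ) : R) ^ c * ∏ i, (-s i) ^ c)
    (fun s τ => ?_) (fun s e => ?_) (fun s j e => ?_) s τ).symm
  · simp [Subsingleton.elim τ 1]
  · simp [Fin.prod_univ_succ, Fin.tail, mul_left_comm]
  · have hprod : ∏ i, (Pi.mulSingle j (s 0) : Fin _ → R) i ^ c = s 0 ^ c := by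
      simp [Finset.prod_pow]
    simp only [Fin.prod_univ_succ, Pi.mul_apply, ← neg_mul, mul_pow, Finset.prod_mul_distrib, hprod]
    simp [Fin.succ_ne_zero, Fin.tail, neg_pow (s 0)]
    ring_nf
    simp

theorem sum_cycleProduct {G N : Type*} [Group G] [Fintype G] [Monoid N] {φ : G × N → R} {ψ : N → R}
    (h : ∀ s, ∑ g, φ (g, s) = Fintype.card G * ψ s) (s : Fin m → N) (τ : Perm (Fin m)) :
    ∑ x : Fin m → G, cycleProduct φ (fun i => (x i, s i)) τ =
      (Fintype.card G : R) ^ m * cycleProduct ψ s τ := by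
  induction m with
  | zero => simp [cycleProduct]
  | succ m ih =>
    rw [← (Fin.consEquiv fun _ : Fin (m + 1) => G).sum_comp, Fintype.sum_prod_type]
    obtain ⟨⟨j, e⟩, rfl⟩ := Perm.decomposeFin.symm.surjective τ
    cases j using Fin.cases with
    | zero =>
      simp only [cycleProduct_fixed, Fin.consEquiv_apply, Fin.cons_zero, Fin.cons_succ,
        Fin.tail_def, ← Finset.mul_sum, ← Finset.sum_mul, ih, h]
      ring
    | succ j =>
      have hshift (g : G) : ∑ y : Fin m → G, cycleProduct φ (Fin.tail (fun i =>
            ((Fin.cons g y : Fin (m + 1) → G) i, s i)) * Pi.mulSingle j (g, s 0)) e =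
          (Fintype.card G : R) ^ m *
            cycleProduct ψ (Fin.tail s * Pi.mulSingle j (s 0)) e := by
        rw [← ih]
        refine Fintype.sum_equiv (Equiv.mulRight (Pi.mulSingle j g : Fin m → G)) _ _ fun y =>
          congrArg (cycleProduct φ · e) (funext fun i => ?_)
        obtain rfl | hi := eq_or_ne i j
        · simp [Fin.tail]
        · simp [Fin.tail, hi]
      simp only [cycleProduct_contract, Fin.consEquiv_apply, Fin.cons_zero, hshift,
        Finset.sum_const, Finset.card_univ, nsmul_eq_mul]
      ring

theorem cycleProduct_finRotate (φ : M → R) (g : M) :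
    cycleProduct φ (Pi.mulSingle 0 g) (finRotate (m + 1)) = φ g := by
  induction m with
  | zero =>
    rw [Subsingleton.elim (finRotate 1) (Perm.decomposeFin.symm (0, 1)), cycleProduct_fixed]
    simp [cycleProduct]
  | succ m ih =>
    rw [finRotate_succ_eq_decomposeFin, ← Fin.succ_zero_eq_one, cycleProduct_contract]
    convert ih using 2
    funext i
    simp [Fin.tail]

section Matrices

variable {κ : Type*} [DecidableEq κ]

/-- The left-hand side is the trace of a coloured permutation acting on a tensor power. -/
theorem sum_prod_eq_cycleProduct [Fintype κ] (A : Fin m → Matrix κ κ R) (τ : Perm (Fin m)) :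
    ∑ f : Fin m → κ, ∏ i, A (τ i) (f (τ i)) (f i) = cycleProduct trace A τ := by
  refine eq_cycleProduct
    (Φ := fun {m} (A : Fin m → Matrix κ κ R) τ => ∑ f : Fin m → κ, ∏ i, A (τ i) (f (τ i)) (f i))
    (fun A τ => by simp) (fun {m} A e => ?_) (fun {m} A j e => ?_) A τ
  · rw [← (Fin.consEquiv fun _ : Fin (m + 1) => κ).sum_comp, Fintype.sum_prod_type]
    simp [Fin.prod_univ_succ, trace, Finset.sum_mul_sum, Fin.tail]
  · obtain ⟨l, rfl⟩ := e.surjective j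
    rw [← (Fin.consEquiv fun _ : Fin (m + 1) => κ).sum_comp, Fintype.sum_prod_type, Finset.sum_comm]
    refine Finset.sum_congr rfl fun f _ => ?_
    let B : Fin m → Matrix κ κ R := Fin.tail A * Pi.mulSingle (e l) (A 0)
    have hrest (a : κ) (i : Fin m) (hi : i ≠ l) :
        A (Perm.decomposeFin.symm ((e l).succ, e) i.succ)
          ((Fin.cons a f : Fin (m + 1) → κ) (Perm.decomposeFin.symm ((e l).succ, e) i.succ)) (f i) =
        B (e i) (f (e i)) (f i) := by
      have hei : e i ≠ e l := e.injective.ne hi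
      have hB : B (e i) = A (e i).succ := by simp [B, hei, Fin.tail]
      rw [decomposeFin_symm_apply_succ_of_ne hei, hB, Fin.cons_succ]
    simp only [Fin.prod_univ_succ, Fin.consEquiv_apply, Fin.cons_zero, Fin.cons_succ,
      ← Finset.mul_prod_erase _ _ (Finset.mem_univ l),
      Finset.prod_congr rfl fun i hi => hrest _ i (Finset.ne_of_mem_erase hi), ← mul_assoc]
    rw [← Finset.sum_mul]
    simp [B, Matrix.mul_apply, Fin.tail]

/-- The block matrix with block `A (τ j)` in position `(τ j, j)` and zeros elsewhere. -/
def blockMonomial (A : Fin m → Matrix κ κ R) (τ : Perm (Fin m)) :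
    Matrix (Fin m × κ) (Fin m × κ) R :=
  Matrix.of fun x y => if x.1 = τ y.1 then A x.1 x.2 y.2 else 0

/-- Splits off the fibre over `0`. -/
def finSuccProdEquiv (m : ℕ) (κ : Type*) : κ ⊕ Fin m × κ ≃ Fin (m + 1) × κ where
  toFun := Sum.elim (fun a => (0, a)) fun x => (x.1.succ, x.2)
  invFun x := Fin.cases (Sum.inl x.2) (fun i => Sum.inr (i, x.2)) x.1
  left_inv := by rintro (a | ⟨i, a⟩) <;> rfl
  right_inv := by rintro ⟨i, a⟩; cases i using Fin.cases <;> rfl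

theorem one_sub_blockMonomial_fixed (A : Fin (m + 1) → Matrix κ κ R) (e : Perm (Fin m)) :
    (1 - blockMonomial A (Perm.decomposeFin.symm (0, e))).submatrix (finSuccProdEquiv m κ)
      (finSuccProdEquiv m κ) =
    Matrix.fromBlocks (1 - A 0) 0 0 (1 - blockMonomial (Fin.tail A) e) := by
  ext (a | ⟨i, a⟩) (b | ⟨l, b⟩) <;>
    simp [finSuccProdEquiv, blockMonomial, Matrix.one_apply, Prod.ext_iff, Fin.succ_ne_zero,
      (Fin.succ_ne_zero _).symm, Fin.tail]

theorem one_sub_blockMonomial_contract (A : Fin (m + 1) → Matrix κ κ R) (j : Fin m)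
    (e : Perm (Fin m)) :
    (1 - blockMonomial A (Perm.decomposeFin.symm (j.succ, e))).submatrix (finSuccProdEquiv m κ)
      (finSuccProdEquiv m κ) =
    Matrix.fromBlocks 1
      (Matrix.of fun a y => if e y.1 = j then -A 0 a y.2 else 0)
      (Matrix.of fun x b => if x.1 = j then -A j.succ x.2 b else 0)
      (1 - Matrix.of fun x y => if x.1 = e y.1 ∧ e y.1 ≠ j then A x.1.succ x.2 y.2 else 0) := by
  ext (a | ⟨i, a⟩) (b | ⟨l, b⟩)
  · simp [finSuccProdEquiv, blockMonomial, Matrix.one_apply, (Fin.succ_ne_zero _).symm]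
  · by_cases hl : e l = j
    · simp [finSuccProdEquiv, blockMonomial, (Fin.succ_ne_zero _).symm, hl]
    · simp [finSuccProdEquiv, blockMonomial, (Fin.succ_ne_zero _).symm, hl,
        decomposeFin_symm_apply_succ_of_ne hl, -Perm.decomposeFin_symm_apply_succ]
  · obtain rfl | hi := eq_or_ne i j
    · simp [finSuccProdEquiv, blockMonomial, Fin.succ_ne_zero]
    · simp [finSuccProdEquiv, blockMonomial, Fin.succ_ne_zero, hi]
  · by_cases hl : e l = j
    · simp [finSuccProdEquiv, blockMonomial, Matrix.one_apply, Fin.succ_ne_zero, hl]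
    · simp [finSuccProdEquiv, blockMonomial, Matrix.one_apply, hl,
        decomposeFin_symm_apply_succ_of_ne hl, -Perm.decomposeFin_symm_apply_succ]

theorem det_one_sub_blockMonomial [Fintype κ] (A : Fin m → Matrix κ κ R) (τ : Perm (Fin m)) :
    (1 - blockMonomial A τ).det = cycleProduct (fun A => (1 - A).det) A τ := by
  refine eq_cycleProduct (Φ := fun A τ => (1 - blockMonomial A τ).det)
    (fun A τ => by simp) (fun {m} A e => ?_) (fun {m} A j e => ?_) A τ
  · rw [← Matrix.det_submatrix_equiv_self (finSuccProdEquiv m κ), one_sub_blockMonomial_fixed,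
      Matrix.det_fromBlocks_zero₂₁]
  · rw [← Matrix.det_submatrix_equiv_self (finSuccProdEquiv m κ), one_sub_blockMonomial_contract,
      Matrix.det_fromBlocks_one₁₁]
    congr 1
    ext ⟨i, a⟩ ⟨l, b⟩
    by_cases hl : e l = j
    · obtain rfl | hi := eq_or_ne i j
      · simp [blockMonomial, Matrix.mul_apply, Fin.tail, hl]
      · simp [blockMonomial, Matrix.mul_apply, hl, hi]
    · obtain rfl | hi := eq_or_ne i (e l)
      · have htail : (Fin.tail A * Pi.mulSingle j (A 0) : Fin m → Matrix κ κ R) (e l) =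
            A (e l).succ := by simp [hl, Fin.tail]
        simp [blockMonomial, htail, Matrix.mul_apply, hl, -Pi.mul_apply]
      · simp [blockMonomial, Matrix.mul_apply, hl, hi]

end Matrices

end CycleProduct

/-! ### Wreath products -/

section Wreath

open SemidirectProduct
open scoped Kronecker

/-- The wreath product of `G` by the symmetric group on `ι`. -/
abbrev Wreath (G ι : Type*) [Group G] : Type _ := (ι → G) ⋊[mulAutArrow] Perm ι

instance {G ι : Type*} [Group G] [Fintype G] [Fintype ι] [DecidableEq ι] :
    Fintype (Wreath G ι) :=
  Fintype.ofEquiv _ equivProd.symm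

variable {G ι κ : Type*} [Group G]

theorem Wreath.mul_left_apply (v w : Wreath G ι) (i : ι) :
    (v * w).left i = v.left i * w.left (v.right⁻¹ i) := rfl

theorem Wreath.sum_eq [Fintype G] [Fintype ι] [DecidableEq ι] {R : Type*} [AddCommMonoid R]
    (F : Wreath G ι → R) : ∑ w, F w = ∑ τ : Perm ι, ∑ x : ι → G, F ⟨x, τ⟩ := by
  rw [← equivProd.symm.sum_comp F, Fintype.sum_prod_type_right]
  rfl

theorem Wreath.card [Fintype G] [Fintype ι] [DecidableEq ι] : Fintype.card (Wreath G ι) =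
    Fintype.card G ^ Fintype.card ι * (Fintype.card ι).factorial := by
  rw [Fintype.card_congr equivProd, Fintype.card_prod, Fintype.card_fun, Fintype.card_perm]

section Imprimitive

/-- The imprimitive action of `Perm κ ≀ Perm ι` on `ι × κ`: the fibre over `i` is moved to the fibre
over `τ i`, where the permutation with index `τ i` is applied. -/
def imprimitive : Wreath (Perm κ) ι →* Perm (ι × κ) where
  toFun w := Equiv.prodShear w.right fun i => w.left (w.right i)
  map_one' := rfl
  map_mul' v w := by
    ext ⟨i, j⟩ <;> simp [Equiv.prodShear, Wreath.mul_left_apply]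

theorem imprimitive_apply (w : Wreath (Perm κ) ι) (x : ι × κ) :
    imprimitive w x = (w.right x.1, w.left (w.right x.1) x.2) := rfl

theorem imprimitive_injective [Nonempty κ] :
    Function.Injective (imprimitive : Wreath (Perm κ) ι →* Perm (ι × κ)) := by
  intro v w h
  have happly (i : ι) (j : κ) := Prod.ext_iff.1 (Equiv.congr_fun h (i, j))
  obtain ⟨o⟩ := ‹Nonempty κ›
  have hright : v.right = w.right := Equiv.ext fun i => (happly i o).1
  refine SemidirectProduct.ext (funext fun i => Equiv.ext fun j => ?_) hright
  have hleft := (happly (w.right.symm i) j).2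
  simpa only [imprimitive_apply, hright, Equiv.apply_symm_apply] using hleft

theorem mem_range_imprimitive_of_fst_apply {σ : Perm (ι × κ)} {τ : Perm ι}
    (hτ : ∀ x, (σ x).1 = τ x.1) : σ ∈ imprimitive.range := by
  have hσ (i : ι) (j : κ) : σ (τ.symm i, j) = (i, (σ (τ.symm i, j)).2) :=
    Prod.ext ((hτ _).trans (τ.apply_symm_apply i)) rfl
  have hσ_symm (i : ι) (j : κ) : σ.symm (i, j) = (τ.symm i, (σ.symm (i, j)).2) :=
    Prod.ext (τ.eq_symm_apply.2 (by rw [← hτ, Equiv.apply_symm_apply])) rfl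
  let fibre (i : ι) : Perm κ :=
    { toFun := fun j => (σ (τ.symm i, j)).2
      invFun := fun j => (σ.symm (i, j)).2
      left_inv := fun j => by beta_reduce; rw [← hσ, Equiv.symm_apply_apply]
      right_inv := fun j => by beta_reduce; rw [← hσ_symm, Equiv.apply_symm_apply] }
  refine ⟨⟨fibre, τ⟩, Equiv.ext fun ⟨i, j⟩ => Prod.ext (hτ (i, j)).symm ?_⟩
  simp [imprimitive_apply, fibre]

theorem mem_range_imprimitive [Nonempty κ] {σ : Perm (ι × κ)} : σ ∈ imprimitive.range ↔
    ∀ i, ∃ i', σ '' (Prod.fst ⁻¹' {i}) = Prod.fst ⁻¹' {i'} := by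
  constructor
  · rintro ⟨w, rfl⟩ i
    refine ⟨w.right i, Set.ext fun ⟨i', j⟩ => ⟨?_, fun h => ?_⟩⟩
    · rintro ⟨⟨_, j'⟩, rfl, hx⟩
      exact (congrArg Prod.fst hx).symm
    · obtain rfl : i' = w.right i := h
      exact ⟨(i, (w.left (w.right i))⁻¹ j), rfl, by simp [imprimitive_apply]⟩
  · intro h
    choose τ hτ using h
    obtain ⟨o⟩ := ‹Nonempty κ›
    have hfst (x : ι × κ) : (σ x).1 = τ x.1 := (hτ x.1).subset (Set.mem_image_of_mem σ rfl)
    have hτ_injective : Function.Injective τ := by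
      intro i i' hii'
      obtain ⟨⟨_, j⟩, rfl, hj⟩ := (hτ i').superset ((hfst (i, o)).trans hii')
      exact congrArg Prod.fst (σ.injective hj.symm)
    have hτ_surjective : Function.Surjective τ := fun i =>
      ⟨(σ.symm (i, o)).1, (hfst _).symm.trans (congrArg Prod.fst (σ.apply_symm_apply _))⟩
    exact mem_range_imprimitive_of_fst_apply
      (τ := Equiv.ofBijective τ ⟨hτ_injective, hτ_surjective⟩) hfst

theorem isCycleOn_imprimitive [Finite ι] [DecidableEq ι] [Finite κ] {τ : Perm ι}
    (hτ : τ.IsCycleOn Set.univ) {π : Perm κ} (hπ : π.IsCycleOn Set.univ) (o : ι) :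
    (imprimitive ⟨Pi.mulSingle o π, τ⟩).IsCycleOn Set.univ := by
  cases nonempty_fintype ι
  cases nonempty_fintype κ
  set σ := imprimitive ⟨Pi.mulSingle o π, τ⟩ with hσ_def
  rw [← Finset.coe_univ] at hτ hπ
  have hpow (n : ℕ) (hn : n < Fintype.card ι) (j : κ) : (σ ^ n) (o, j) = ((τ ^ n) o, j) := by
    induction n with
    | zero => rfl
    | succ n ih =>
      have hne : (τ ^ (n + 1)) o ≠ o := fun h =>
        Nat.not_dvd_of_pos_of_lt n.succ_pos hn ((hτ.pow_apply_eq (Finset.mem_univ o)).1 h)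
      rw [pow_succ', Perm.mul_apply] at hne ⊢
      rw [ih (n.lt_succ_self.trans hn), pow_succ', hσ_def, imprimitive_apply]
      simp [Pi.mulSingle_eq_of_ne hne]
  have hfirst (j : κ) : σ.SameCycle (o, j) (o, π j) := by
    obtain ⟨n, hn⟩ := Nat.exists_eq_succ_of_ne_zero (Fintype.card_pos_iff.2 ⟨o⟩).ne'
    have hcard : τ ((τ ^ n) o) = o := by
      have h := hτ.pow_card_apply (Finset.mem_univ o)
      rwa [Finset.card_univ, hn, pow_succ', Perm.mul_apply] at h
    refine ⟨(n + 1 : ℕ), ?_⟩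
    rw [zpow_natCast, pow_succ', Perm.mul_apply, hpow n (hn ▸ n.lt_succ_self), hσ_def,
      imprimitive_apply]
    simp [hcard]
  have hbase (j j' : κ) : σ.SameCycle (o, j) (o, j') := by
    obtain ⟨n, -, rfl⟩ := hπ.exists_pow_eq (Finset.mem_univ j) (Finset.mem_univ j')
    clear * - hfirst
    induction n with
    | zero => rfl
    | succ n ih => exact ih.trans (by rw [pow_succ']; exact hfirst _)
  have hreach (i : ι) (j : κ) : σ.SameCycle (o, j) (i, j) := by
    obtain ⟨n, hn, rfl⟩ := hτ.exists_pow_eq (Finset.mem_univ o) (Finset.mem_univ i)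
    exact ⟨n, hpow n hn j⟩
  exact isCycleOn_univ_iff.2 fun ⟨i, j⟩ ⟨i', j'⟩ =>
    (hreach i j).symm.trans ((hbase j j').trans (hreach i' j'))

theorem permDet_imprimitive {R : Type*} [CommRing R] [Fintype κ] [DecidableEq κ] {m : ℕ} (t : R)
    (x : Fin m → Perm κ) (τ : Perm (Fin m)) : permDet t (imprimitive ⟨x, τ⟩) =
      cycleProduct (fun y : Perm κ × R => permDet (-y.2) y.1) (fun i => (x i, -t)) τ := by
  let scaled : Perm κ × R →* Matrix κ κ R :=
    { toFun := fun y => y.2 • Matrix.permMatrixHom y.1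
      map_one' := by simp
      map_mul' := fun y z => by simp [smul_smul, mul_comm] }
  have hblock : 1 + t • (Matrix.permMatrixHom (imprimitive ⟨x, τ⟩) : Matrix (Fin m × κ) _ R) =
      1 - blockMonomial (scaled ∘ fun i => (x i, -t)) τ := by
    ext ⟨i, a⟩ ⟨l, b⟩
    by_cases hi : i = τ l <;>
      simp only [blockMonomial, Matrix.add_apply, Matrix.sub_apply, Matrix.smul_apply,
        permMatrixHom_apply, imprimitive_apply, Matrix.of_apply, Function.comp_apply, scaled,
        MonoidHom.coe_mk, OneHom.coe_mk, Prod.mk.injEq, hi] <;>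
      simp [sub_eq_add_neg, neg_ite]
  rw [permDet, hblock, det_one_sub_blockMonomial, cycleProduct_comp]
  congr 1
  funext y
  simp [permDet, scaled, sub_eq_add_neg]

theorem permDet_eq_cycleProduct {R : Type*} [CommRing R] {m : ℕ} (t : R) (τ : Perm (Fin m)) :
    permDet t τ = cycleProduct (fun s => 1 - s) (fun _ => -t) τ := by
  have hunit := permDet_imprimitive (κ := Unit) t 1 τ
  rw [permDet_reindex t (Equiv.prodPUnit _) (τ := τ) fun _ => rfl] at hunit
  refine (hunit.trans (cycleProduct_comp (MonoidHom.inr (Perm Unit) R) _ _ τ)).trans ?_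
  congr 1
  funext s
  simp [permDet, sub_eq_add_neg]

end Imprimitive

section TensorInduced

variable {R : Type*} [CommRing R] [Fintype ι] [Fintype κ] [DecidableEq κ]

/-- The tensor power of a matrix representation `ρ` of `G`, extended to the wreath product by
permuting the tensor factors. -/
def tensorInduced [DecidableEq ι] (ρ : G →* Matrix κ κ R) :
    Wreath G ι →* Matrix (ι → κ) (ι → κ) R where
  toFun w := Matrix.of fun f f' => ∏ i, ρ (w.left (w.right i)) (f (w.right i)) (f' i)
  map_one' := by
    ext f f'
    simp [Matrix.one_apply, Finset.prod_ite_zero, funext_iff]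
  map_mul' v w := by
    ext f f'
    simp only [Matrix.mul_apply, Matrix.of_apply, mul_right, Perm.mul_apply, Wreath.mul_left_apply,
      map_mul, Equiv.symm_apply_apply, Perm.inv_def, Finset.prod_univ_sum, Fintype.piFinset_univ]
    refine (Fintype.sum_equiv (w.right.symm.arrowCongr (Equiv.refl κ)) _ _ fun h => ?_).symm
    rw [← Equiv.prod_comp w.right, ← Finset.prod_mul_distrib]
    simp [Equiv.arrowCongr]

theorem trace_tensorInduced {m : ℕ} (ρ : G →* Matrix κ κ R) (w : Wreath G (Fin m)) :
    trace (tensorInduced ρ w) = cycleProduct (fun g => trace (ρ g)) w.left w.right :=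
  (sum_prod_eq_cycleProduct (ρ ∘ w.left) w.right).trans (cycleProduct_comp ρ _ _ _)

/-- The tensor induction of `ρ`, twisted by the `c`-th power of the sign of the top group and by a
matrix representation `θ` of the top group. -/
def twistedTensorInduced [DecidableEq ι] {η : Type*} [Fintype η] [DecidableEq η] (c : ℕ)
    (ρ : G →* Matrix κ κ R) (θ : Perm ι →* Matrix η η R) :
    Wreath G ι →* Matrix ((ι → κ) × η) ((ι → κ) × η) R where
  toFun w := ((Perm.sign w.right : ℤ) : R) ^ c • tensorInduced ρ w ⊗ₖ θ w.right
  map_one' := by simp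
  map_mul' v w := by
    rw [smul_mul_smul_comm, ← Matrix.mul_kronecker_mul, ← map_mul, ← map_mul, mul_right, ← mul_pow,
      map_mul, Units.val_mul, Int.cast_mul]

theorem exists_character_eq_tensorInduced {K : Type} [Group K] {κ η : Type} [Fintype κ]
    [DecidableEq κ] [Fintype η] [DecidableEq η] {m : ℕ} (f : K →* Wreath G (Fin m)) (c : ℕ)
    (ρ : G →* Matrix κ κ ℂ) (θ : Perm (Fin m) →* Matrix η η ℂ) :
    ∃ V : FDRep ℂ K, ∀ k, V.character k = ((Perm.sign (f k).right : ℤ) : ℂ) ^ c *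
      cycleProduct (fun g => trace (ρ g)) (f k).left (f k).right * trace (θ (f k).right) := by
  refine ⟨matrixFDRep ((twistedTensorInduced c ρ θ).comp f), fun k => ?_⟩
  rw [character_matrixFDRep, ← trace_tensorInduced, mul_assoc, ← smul_eq_mul,
    ← Matrix.trace_kronecker, ← Matrix.trace_smul]
  rfl

end TensorInduced

section WreathChar

variable [Fintype κ] [LinearOrder κ] {m : ℕ} (o : κ) (o' : Fin m)

/-- The character of the wreath product obtained from the `c`-th hook character of `Perm κ` by
tensor induction, a twist by the `c`-th power of the sign of `Perm (Fin m)`, and multiplication by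
the `b`-th hook character of `Perm (Fin m)`. -/
def wreathChar (c b : ℕ) (w : Wreath (Perm κ) (Fin m)) : ℂ :=
  ((Perm.sign w.right : ℤ) : ℂ) ^ c * cycleProduct (hookChar o c) w.left w.right *
    hookChar o' b w.right

theorem exists_character_eq_wreathChar {K : Type} [Group K] {κ : Type} [Fintype κ] [LinearOrder κ]
    (o : κ) (f : K →* Wreath (Perm κ) (Fin m)) (c b : ℕ) :
    ∃ V : FDRep ℂ K, ∀ k, V.character k = wreathChar o o' c b (f k) :=
  exists_character_eq_tensorInduced f c (hookRep o c) (hookRep o' b)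

theorem conj_wreathChar (c b : ℕ) (w : Wreath (Perm κ) (Fin m)) :
    conj (wreathChar o o' c b w) = wreathChar o o' c b w := by
  have hreal : (starRingEnd ℂ) ∘ hookChar o c = hookChar o c := funext (conj_hookChar o c)
  simp only [wreathChar, map_mul, map_pow, map_intCast, map_cycleProduct, hreal, conj_hookChar]

theorem sign_pow_mul_self {α : Type*} [Fintype α] [DecidableEq α] (τ : Perm α) (c : ℕ) :
    ((Perm.sign τ : ℤ) : ℂ) ^ c * ((Perm.sign τ : ℤ) : ℂ) ^ c = 1 := by
  rw [← mul_pow, ← Int.cast_mul, ← Units.val_mul, Int.units_mul_self]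
  simp

theorem sum_cycleProduct_hookChar_mul [NeZero m] {c c' : ℕ} (hc : c < Fintype.card κ)
    (hc' : c' < Fintype.card κ) (τ : Perm (Fin m)) :
    ∑ x : Fin m → Perm κ, cycleProduct (hookChar o c) x τ * cycleProduct (hookChar o c') x τ =
      if c' = c then ((Fintype.card κ).factorial : ℂ) ^ m else 0 := by
  have hsum (s : Unit) :
      ∑ g, (hookChar o c * hookChar o c' : Perm κ → ℂ) (MonoidHom.fst _ _ (g, s)) =
      Fintype.card (Perm κ) * (if c' = c then 1 else 0 : Unit → ℂ) s := by
    simp only [MonoidHom.coe_fst, Pi.mul_apply, sum_hookChar_mul_hookChar o hc hc',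
      Fintype.card_perm]
    split_ifs <;> simp
  have hcycle := sum_cycleProduct
    (φ := (hookChar o c * hookChar o c') ∘ MonoidHom.fst _ Unit) hsum 1 τ
  simp only [← cycleProduct_comp] at hcycle
  simp only [cycleProduct_mul]
  refine hcycle.trans ?_
  rw [Fintype.card_perm]
  split_ifs
  · rw [cycleProduct_one, mul_one]
  · rw [cycleProduct_zero, mul_zero]

theorem sum_wreathChar_mul_wreathChar [NeZero m] {c c' b b' : ℕ} (hc : c < Fintype.card κ)
    (hc' : c' < Fintype.card κ) (hb : b < m) (hb' : b' < m) :
    ∑ w, wreathChar o o' c b w * wreathChar o o' c' b' w =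
      if c' = c ∧ b' = b then (Fintype.card (Wreath (Perm κ) (Fin m)) : ℂ) else 0 := by
  have hinner (τ : Perm (Fin m)) : ∑ x : Fin m → Perm κ,
      wreathChar o o' c b ⟨x, τ⟩ * wreathChar o o' c' b' ⟨x, τ⟩ =
      (if c' = c then ((Fintype.card κ).factorial : ℂ) ^ m else 0) *
        (hookChar o' b τ * hookChar o' b' τ) := by
    calc
      _ = ((Perm.sign τ : ℤ) : ℂ) ^ c * ((Perm.sign τ : ℤ) : ℂ) ^ c' *
          (∑ x, cycleProduct (hookChar o c) x τ * cycleProduct (hookChar o c') x τ) *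
          (hookChar o' b τ * hookChar o' b' τ) := by
        rw [Finset.mul_sum, Finset.sum_mul]
        exact Finset.sum_congr rfl fun x _ => by simp only [wreathChar]; ring
      _ = _ := by
        rw [sum_cycleProduct_hookChar_mul o hc hc']
        split_ifs with h
        · rw [h, sign_pow_mul_self, one_mul]
        · rw [mul_zero]
  rw [Wreath.sum_eq]
  simp only [hinner, ← Finset.mul_sum, Wreath.card, Fintype.card_perm, Fintype.card_fin,
    sum_hookChar_mul_hookChar o' (hb.trans_eq (Fintype.card_fin m).symm)
      (hb'.trans_eq (Fintype.card_fin m).symm)]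
  split_ifs <;> simp_all

theorem sum_permDet_imprimitive_mul_cycleProduct {c : ℕ} (hc : c < Fintype.card κ) (t : ℂ)
    (τ : Perm (Fin m)) :
    ∑ x : Fin m → Perm κ, permDet t (imprimitive ⟨x, τ⟩) * cycleProduct (hookChar o c) x τ =
      ((Fintype.card κ).factorial : ℂ) ^ m *
        (permDet t τ * (((Perm.sign τ : ℤ) : ℂ) ^ c * t ^ (c * m))) := by
  have hsum (s : ℂ) : ∑ g, ((fun y : Perm κ × ℂ => permDet (-y.2) y.1) *
      (hookChar o c ∘ MonoidHom.fst (Perm κ) ℂ)) (g, s) =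
      Fintype.card (Perm κ) * ((fun s => 1 - s) * fun s => (-s) ^ c : ℂ → ℂ) s := by
    simp only [Pi.mul_apply, Function.comp_apply, MonoidHom.coe_fst,
      sum_permDet_mul_hookChar o _ hc, Fintype.card_perm, sub_eq_add_neg]
  have hprod : (∏ _i : Fin m, (- -t) ^ c) = t ^ (c * m) := by
    rw [Finset.prod_const, Finset.card_univ, Fintype.card_fin, neg_neg, pow_mul]
  calc
    _ = ∑ x : Fin m → Perm κ, cycleProduct ((fun y : Perm κ × ℂ => permDet (-y.2) y.1) *
          (hookChar o c ∘ MonoidHom.fst (Perm κ) ℂ)) (fun i => (x i, -t)) τ := by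
      refine Finset.sum_congr rfl fun x _ => ?_
      rw [permDet_imprimitive, ← cycleProduct_mul, ← cycleProduct_comp]
      rfl
    _ = _ := by
      rw [sum_cycleProduct hsum, ← cycleProduct_mul, ← permDet_eq_cycleProduct,
        cycleProduct_neg_pow, hprod, Fintype.card_perm]

theorem sum_permDet_imprimitive_mul_wreathChar {c b : ℕ} (hc : c < Fintype.card κ) (hb : b < m)
    (t : ℂ) : ∑ w, permDet t (imprimitive w) * wreathChar o o' c b w =
      Fintype.card (Wreath (Perm κ) (Fin m)) * ((1 + t) * t ^ (c * m + b)) := by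
  have hinner (τ : Perm (Fin m)) : ∑ x : Fin m → Perm κ,
      permDet t (imprimitive ⟨x, τ⟩) * wreathChar o o' c b ⟨x, τ⟩ =
      ((Fintype.card κ).factorial : ℂ) ^ m * t ^ (c * m) * (permDet t τ * hookChar o' b τ) := by
    calc
      _ = ((Perm.sign τ : ℤ) : ℂ) ^ c *
          (∑ x, permDet t (imprimitive ⟨x, τ⟩) * cycleProduct (hookChar o c) x τ) *
          hookChar o' b τ := by
        rw [Finset.mul_sum, Finset.sum_mul]
        exact Finset.sum_congr rfl fun x _ => by simp only [wreathChar]; ring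
      _ = (((Perm.sign τ : ℤ) : ℂ) ^ c * ((Perm.sign τ : ℤ) : ℂ) ^ c) *
          (((Fintype.card κ).factorial : ℂ) ^ m * t ^ (c * m) *
            (permDet t τ * hookChar o' b τ)) := by
        rw [sum_permDet_imprimitive_mul_cycleProduct o hc]
        ring
      _ = _ := by rw [sign_pow_mul_self, one_mul]
  rw [Wreath.sum_eq]
  simp only [hinner, ← Finset.mul_sum,
    sum_permDet_mul_hookChar o' t (hb.trans_eq (Fintype.card_fin m).symm), Wreath.card,
    Fintype.card_perm, Fintype.card_fin]
  push_cast
  ring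

theorem wreathChar_mulSingle_finRotate {n : ℕ} (o' : Fin (n + 1)) {π : Perm κ}
    (hπ : π.IsCycleOn Set.univ) {c b : ℕ} (hc : c < Fintype.card κ) (hb : b < n + 1) :
    wreathChar o o' c b ⟨Pi.mulSingle 0 π, finRotate (n + 1)⟩ =
      ((Perm.sign (finRotate (n + 1)) ^ c * (-1) ^ c * (-1) ^ b : ℤˣ) : ℤ) := by
  rw [wreathChar, cycleProduct_finRotate, hookChar_of_isCycleOn o hπ hc,
    hookChar_of_isCycleOn o' (isCycleOn_univ_finRotate _) (hb.trans_eq (Fintype.card_fin _).symm)]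
  push_cast
  rfl

end WreathChar

end Wreath

/-! ### Restriction of characters from the symmetric group to the wreath product -/

section Restriction

theorem sum_hookChar_imprimitive_mul_wreathChar {α κ : Type*} [Fintype α] [LinearOrder α]
    [Fintype κ] [LinearOrder κ] {m : ℕ} (β : Fin m × κ ≃ α) (o : α) (o₁ : κ) (o₂ : Fin m)
    {r c b : ℕ} (hr : r < Fintype.card α) (hc : c < Fintype.card κ) (hb : b < m) :
    ∑ w, hookChar o r (β.permCongr (imprimitive w)) * wreathChar o₁ o₂ c b w =
      if r = c * m + b then (Fintype.card (Wreath (Perm κ) (Fin m)) : ℂ) else 0 := by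
  have hcard : c * m + b < Fintype.card α := by
    rw [← Fintype.card_congr β, Fintype.card_prod, Fintype.card_fin]
    nlinarith
  refine eq_of_sum_mul_pow_eq
    (a := fun r => ∑ w, hookChar o r (β.permCongr (imprimitive w)) * wreathChar o₁ o₂ c b w)
    (b := fun r => if r = c * m + b then (Fintype.card (Wreath (Perm κ) (Fin m)) : ℂ) else 0)
    (fun t => ?_) hr
  have hreindex (w : Wreath (Perm κ) (Fin m)) :
      permDet t (imprimitive w) = permDet t (β.permCongr (imprimitive w)) :=
    permDet_reindex t β fun x => by simp
  have hsum := sum_permDet_imprimitive_mul_wreathChar o₁ o₂ hc hb t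
  simp only [hreindex, mul_comm _ (wreathChar _ _ _ _ _), sum_mul_permDet o] at hsum
  simp only [mul_comm _ (wreathChar _ _ _ _ _), hsum, ite_mul, zero_mul, Finset.sum_ite_eq',
    Finset.mem_range, hcard, if_true]
  ring

theorem charInner_hookChar_wreathChar {α κ : Type} [Fintype α] [LinearOrder α] [Fintype κ]
    [LinearOrder κ] {m : ℕ} {β : Fin m × κ ≃ α} {H : Subgroup (Perm α)}
    {f : H ≃* Wreath (Perm κ) (Fin m)}
    (hf : ∀ h : H, (h : Perm α) = β.permCongr (imprimitive (f h)))
    (o : α) (o₁ : κ) (o₂ : Fin m) {r c b : ℕ} (hr : r < Fintype.card α) (hc : c < Fintype.card κ)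
    (hb : b < m) :
    charInner H (hookChar o r) (fun h => wreathChar o₁ o₂ c b (f h)) =
      if r = c * m + b then 1 else 0 := by
  have hsum := sum_hookChar_imprimitive_mul_wreathChar β o o₁ o₂ hr hc hb
  rw [← f.toEquiv.sum_comp] at hsum
  simp only [charInner, conj_wreathChar, finsum_eq_sum_of_fintype, hf]
  rw [Nat.card_congr f.toEquiv, Nat.card_eq_fintype_card]
  convert! congrArg ((Fintype.card (Wreath (Perm κ) (Fin m)) : ℂ)⁻¹ * ·) hsum using 1
  split_ifs
  · exact (inv_mul_cancel₀ (Nat.cast_ne_zero.2 Fintype.card_ne_zero)).symm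
  · exact (mul_zero _).symm

theorem not_natCast_dvd_intUnit {p : ℕ} (hp : p.Prime) (u : ℤˣ) : ¬(p : ℤ) ∣ u := fun h =>
  (Nat.prime_iff_prime_int.1 hp).not_isUnit (isUnit_of_dvd_unit h u.isUnit)

theorem exists_equiv_irrCoprime_hookChar {p n N : ℕ} (hp : p.Prime) (hN : N = p ^ n) (o : Fin N) :
    ∃ e : Fin N ≃ IrrCoprime p (Perm (Fin N)),
      ∀ r, (e r : Perm (Fin N) → ℂ) = hookChar o r := by
  have hlt (r : Fin N) : (r : ℕ) < Fintype.card (Fin N) := r.2.trans_eq (Fintype.card_fin N).symm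
  have hchar (r : Fin N) : (matrixFDRep (hookRep o r)).character = hookChar o r :=
    funext (character_matrixFDRep _)
  simp only [← hchar]
  refine exists_equiv_irrCoprime_of_isCycleOn hp ((Fintype.card_fin N).trans hN)
    (j := MonoidHom.id (Perm (Fin N))) (g := finRotate N) Function.injective_id
    (isCycleOn_univ_finRotate N) ((Fintype.card_fin N).trans hN) (fun r s => ?_)
    (fun r => ⟨_, not_natCast_dvd_intUnit hp ((-1) ^ (r : ℕ)), ?_⟩)
  · simp only [hchar, conj_hookChar, sum_hookChar_mul_hookChar o (hlt r) (hlt s), Fin.val_inj,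
      eq_comm, Nat.card_perm, Nat.card_fin, Fintype.card_fin]
  · rw [hchar, hookChar_of_isCycleOn o (isCycleOn_univ_finRotate N) (hlt r)]
    simp

theorem exists_equiv_irrCoprime_wreathChar {p n m q : ℕ} (hp : p.Prime) (hmq : m * q = p ^ n)
    (o₁ : Fin q) (o₂ : Fin m) {K : Type} [Group K] (f : K ≃* Wreath (Perm (Fin q)) (Fin m)) :
    ∃ e : Fin q × Fin m ≃ IrrCoprime p K,
      ∀ x, (e x : K → ℂ) = fun k => wreathChar o₁ o₂ x.1 x.2 (f k) := by
  obtain ⟨m, rfl⟩ := Nat.exists_eq_succ_of_ne_zero o₂.pos.ne'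
  have : Nonempty (Fin q) := ⟨o₁⟩
  have : Fintype K := Fintype.ofEquiv _ f.symm.toEquiv
  have hlt {N : ℕ} (i : Fin N) : (i : ℕ) < Fintype.card (Fin N) :=
    i.2.trans_eq (Fintype.card_fin N).symm
  choose V hV using fun x : Fin q × Fin (m + 1) =>
    exists_character_eq_wreathChar o₂ o₁ f.toMonoidHom x.1 x.2
  let g : K := f.symm ⟨Pi.mulSingle 0 (finRotate q), finRotate (m + 1)⟩
  have hcycle : (imprimitive (f g)).IsCycleOn Set.univ := by
    rw [f.apply_symm_apply]
    exact isCycleOn_imprimitive (isCycleOn_univ_finRotate (m + 1)) (isCycleOn_univ_finRotate q) 0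
  have horth (x y : Fin q × Fin (m + 1)) : ∑ k, (V x).character k * conj ((V y).character k) =
      if x = y then (Nat.card K : ℂ) else 0 := by
    simp only [hV, conj_wreathChar]
    refine (f.toEquiv.sum_comp fun w =>
      wreathChar o₁ o₂ x.1 x.2 w * wreathChar o₁ o₂ y.1 y.2 w).trans ?_
    rw [sum_wreathChar_mul_wreathChar o₁ o₂ (hlt _) (hlt _) x.2.2 y.2.2, Nat.card_congr f.toEquiv,
      Nat.card_eq_fintype_card]
    simp only [Fin.val_inj, ← Prod.ext_iff, eq_comm]
  have hval (x : Fin q × Fin (m + 1)) : ∃ a : ℤ, ¬(p : ℤ) ∣ a ∧ (V x).character g = a := by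
    have hchar := wreathChar_mulSingle_finRotate o₁ o₂ (isCycleOn_univ_finRotate q) (hlt x.1) x.2.2
    rw [← f.apply_symm_apply ⟨_, _⟩] at hchar
    exact ⟨_, not_natCast_dvd_intUnit hp _, (hV x g).trans hchar⟩
  obtain ⟨e, he⟩ := exists_equiv_irrCoprime_of_isCycleOn hp (by simpa using hmq)
    (j := imprimitive.comp f.toMonoidHom) (imprimitive_injective.comp f.injective) hcycle
    (by simpa [mul_comm] using hmq) horth hval
  exact ⟨e, fun x => (he x).trans (funext (hV x))⟩

theorem exists_mulEquiv_wreath {α ι κ : Type*} [Nonempty κ] (β : ι × κ ≃ α)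
    {H : Subgroup (Perm α)} (hH : ∀ σ, σ ∈ H ↔
      ∀ i, ∃ i', σ '' {a | (β.symm a).1 = i} = {a | (β.symm a).1 = i'}) :
    ∃ f : H ≃* Wreath (Perm κ) ι, ∀ h : H, (h : Perm α) = β.permCongr (imprimitive (f h)) := by
  have hblock (i : ι) : {a | (β.symm a).1 = i} = β '' (Prod.fst ⁻¹' {i}) :=
    (β.image_eq_preimage_symm (Prod.fst ⁻¹' {i})).symm
  have himage (σ : Perm (ι × κ)) (S : Set (ι × κ)) : β.permCongr σ '' (β '' S) = β '' (σ '' S) := by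
    simp [Set.image_image]
  let Θ : Wreath (Perm κ) ι →* Perm α := β.permCongrHom.toMonoidHom.comp imprimitive
  have hΘ : Function.Injective Θ := β.permCongrHom.injective.comp imprimitive_injective
  obtain rfl : H = Θ.range := by
    ext σ
    obtain ⟨σ, rfl⟩ := β.permCongr.surjective σ
    simp only [hH, hblock, himage, β.injective.image_injective.eq_iff, ← mem_range_imprimitive]
    exact exists_congr fun w => β.permCongr.apply_eq_iff_eq.symm
  exact ⟨(MonoidHom.ofInjective hΘ).symm, fun h =>
    (congrArg Subtype.val ((MonoidHom.ofInjective hΘ).apply_symm_apply h)).symm⟩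

theorem exists_equiv_of_charInner_eq_ite {p : ℕ} {G : Type} [Group G] {H : Subgroup G} {I : Type*}
    [DecidableEq I] (e₁ : I ≃ IrrCoprime p G) (e₂ : I ≃ IrrCoprime p H)
    (h : ∀ i j, charInner H (e₁ i) (e₂ j) = if i = j then 1 else 0) :
    ∃ f : IrrCoprime p G ≃ IrrCoprime p H, ∀ χ : IrrCoprime p G,
      charInner H χ.val (f χ).val = 1 ∧
      ∀ ψ : H → ℂ, ψ ∈ IrrCoprime p H → charInner H χ.val ψ ≠ 0 → ψ = (f χ).val := by
  refine ⟨e₁.symm.trans e₂, fun χ => ?_⟩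
  obtain ⟨i, rfl⟩ := e₁.surjective χ
  simp only [Equiv.trans_apply, Equiv.symm_apply_apply]
  refine ⟨by rw [h, if_pos rfl], fun ψ hψ hne => ?_⟩
  obtain ⟨j, hj⟩ := e₂.surjective ⟨ψ, hψ⟩
  obtain rfl : ψ = e₂ j := (congrArg Subtype.val hj).symm
  rw [h, ne_eq, ite_eq_right_iff, not_forall] at hne
  rw [hne.1]

/-- The identification of `Fin m × Fin q` with `Fin N` under which the fibres of the first
projection become the blocks of `q` consecutive elements. -/
def blockEquiv {m q N : ℕ} (hN : m * q = N) : Fin m × Fin q ≃ Fin N :=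
  finProdFinEquiv.trans (finCongr hN)

theorem val_blockEquiv {m q N : ℕ} (hN : m * q = N) (x : Fin m × Fin q) :
    (blockEquiv hN x : ℕ) = x.1 * q + x.2 :=
  (add_comm _ _).trans (congrArg (· + _) (mul_comm _ _))

theorem val_blockEquiv_symm_fst {m q N : ℕ} (hN : m * q = N) (a : Fin N) :
    (((blockEquiv hN).symm a).1 : ℕ) = a / q := rfl

end Restriction

theorem theoremB_general (p k m q : ℕ) (hp : p.Prime) (hmq : m * q = p ^ k)
    (H : Subgroup (Perm (Fin (p ^ k))))
    (hH : ∀ σ : Perm (Fin (p ^ k)), σ ∈ H ↔ ∀ r : ℕ, r < m → ∃ r' : ℕ, r' < m ∧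
      σ '' {i : Fin (p ^ k) | (i : ℕ) / q = r} = {i : Fin (p ^ k) | (i : ℕ) / q = r'}) :
    ∃ f : IrrCoprime p (Perm (Fin (p ^ k))) ≃ IrrCoprime p H,
      ∀ χ : IrrCoprime p (Perm (Fin (p ^ k))),
        charInner H χ.val (f χ).val = 1 ∧
        (∀ ψ : H → ℂ, ψ ∈ IrrCoprime p H → charInner H χ.val ψ ≠ 0 → ψ = (f χ).val) ∧
        (∀ ψ : H → ℂ, ψ ∈ Irr H → charInner H χ.val ψ ≠ 0 → ψ ≠ (f χ).val →
          ψ ∉ IrrCoprime p H) := by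
  have hpos : 0 < m * q := hmq ▸ pow_pos hp.pos k
  let o : Fin (p ^ k) := ⟨0, pow_pos hp.pos k⟩
  let o₁ : Fin q := ⟨0, Nat.pos_of_ne_zero (right_ne_zero_of_mul hpos.ne')⟩
  let o₂ : Fin m := ⟨0, Nat.pos_of_ne_zero (left_ne_zero_of_mul hpos.ne')⟩
  have : Nonempty (Fin q) := ⟨o₁⟩
  obtain ⟨f, hf⟩ := exists_mulEquiv_wreath (blockEquiv hmq) (H := H) (by
    simpa only [Fin.forall_iff, Fin.exists_iff, Fin.ext_iff, val_blockEquiv_symm_fst, exists_prop]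
      using hH)
  obtain ⟨e₁, he₁⟩ := exists_equiv_irrCoprime_hookChar hp rfl o
  obtain ⟨e₂, he₂⟩ := exists_equiv_irrCoprime_wreathChar hp hmq o₁ o₂ f
  let index : Fin q × Fin m ≃ Fin (p ^ k) := blockEquiv ((mul_comm q m).trans hmq)
  have hindex (x y : Fin q × Fin m) :
      charInner H (e₁ (index x)) (e₂ y) = if x = y then 1 else 0 := by
    rw [he₁, he₂, charInner_hookChar_wreathChar hf o o₁ o₂ (by simp) (by simp) y.2.2,
      ← val_blockEquiv ((mul_comm q m).trans hmq)]
    exact if_congr (Fin.val_inj.trans index.injective.eq_iff) rfl rfl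
  obtain ⟨F, hF⟩ := exists_equiv_of_charInner_eq_ite (index.trans e₁) e₂ hindex
  exact ⟨F, fun χ => ⟨(hF χ).1, (hF χ).2, fun ψ _ hne hne' hψ => hne' ((hF χ).2 ψ hψ hne)⟩⟩

/-- **Theorem B.** Let `p` be an odd prime, `k ≥ 1`, and let `H ≤ S_{p^k}` be the stabilizer of
the partition of `{0,…,p^k-1}` into the `p` consecutive blocks of size `p^(k-1)` (the block of
`i` is `i / p^(k-1)`); so `H ≅ S_{p^(k-1)} ≀ S_p`.  For every `χ ∈ Irr_{p'}(S_{p^k})`, the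
restriction of `χ` to `H` has a unique irreducible constituent `χ*` of degree coprime to `p`;
it occurs with multiplicity one, all other irreducible constituents have degree divisible by
`p`, and `χ ↦ χ*` is a bijection from `Irr_{p'}(S_{p^k})` onto `Irr_{p'}(H)`. -/
theorem theoremB (p k : ℕ) (hp : p.Prime) (hodd : Odd p) (hk : 1 ≤ k)
    (H : Subgroup (Equiv.Perm (Fin (p ^ k))))
    (hH : ∀ σ : Equiv.Perm (Fin (p ^ k)), σ ∈ H ↔
      ∀ r : ℕ, r < p → ∃ r' : ℕ, r' < p ∧
        (⇑σ '' {i : Fin (p ^ k) | (i : ℕ) / p ^ (k - 1) = r}) =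
          {i : Fin (p ^ k) | (i : ℕ) / p ^ (k - 1) = r'}) :
    ∃ f : (IrrCoprime p (Equiv.Perm (Fin (p ^ k)))) ≃ (IrrCoprime p ↥H),
      ∀ χ : IrrCoprime p (Equiv.Perm (Fin (p ^ k))),
        charInner H χ.val (f χ).val = 1 ∧
        (∀ ψ : ↥H → ℂ, ψ ∈ IrrCoprime p ↥H → charInner H χ.val ψ ≠ 0 → ψ = (f χ).val) ∧
        (∀ ψ : ↥H → ℂ, ψ ∈ Irr ↥H → charInner H χ.val ψ ≠ 0 → ψ ≠ (f χ).val →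
          ψ ∉ IrrCoprime p ↥H) := by
  have hcard : p * p ^ (k - 1) = p ^ k := mul_pow_sub_one (Nat.one_le_iff_ne_zero.1 hk) p
  exact theoremB_general p k p (p ^ (k - 1)) hp hcard H hH
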